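/- There exist absolute constants C > 0 such that the following holds. Let p be an odd prime, let g, h : 𝔽_p* → 𝔽_p* be arbitrary functions, define f(x,y) = g(x)(h(x)+y) on 𝔽_p* × 𝔽_p*, and set m = μ(g). Then for all nonempty finite subsets A, B, C ⊆ 𝔽_p* with |A| ≤ |B| and |A|, |B|, |C| ≤ p^{3/5}, the fourth-order difference energy satisfies E₄(B,C) = Σ_x r_{B−C}(x)⁴ ≤ C · m⁴ · min{ |f(A,B)|³|C|²/|A| , |f(A,B)|²|C|³/|A| } · log(2|A|). -/

import Mathlib

open Finset Pointwise

/-- `mu g` is `max_{t ∈ 𝔽_p*} |{x ∈ 𝔽_p* : g x = t}|`. -/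
def mu {p : ℕ} [NeZero p] (g : ZMod p → ZMod p) : ℕ :=
  Finset.sup (Finset.univ.filter fun t : ZMod p => t ≠ 0)
    (fun t => (Finset.univ.filter fun x : ZMod p => x ≠ 0 ∧ g x = t).card)

/-- `rSub B C x` is the number of ways to write `x = b - c` with `b ∈ B`, `c ∈ C`. -/
def rSub {p : ℕ} (B C : Finset (ZMod p)) (x : ZMod p) : ℕ :=
  ((B ×ˢ C).filter fun bc => bc.1 - bc.2 = x).card

/-- Fourth-order difference energy `E₄(B,C) = Σ_x r_{B-C}(x)^4`. -/
def E4 {p : ℕ} [NeZero p] (B C : Finset (ZMod p)) : ℕ :=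
  ∑ x : ZMod p, (rSub B C x) ^ 4



theorem chain_rule {F S : Type*} [Field F] [CommRing S] [Algebra F S] (D : Derivation F S S)
    (f : Fin 3 → S) (P : MvPolynomial (Fin 3) F) :
    D (MvPolynomial.aeval f P) =
      ∑ i, MvPolynomial.aeval f (MvPolynomial.pderiv i P) * D (f i) := by
  induction P using MvPolynomial.induction_on with
  | C a => simp
  | add p q hp hq => simp only [map_add, hp, hq, add_mul, Finset.sum_add_distrib]
  | mul_X p n hp =>
    simp only [map_mul, Derivation.leibniz, MvPolynomial.aeval_X, smul_eq_mul, hp, map_add,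
      MvPolynomial.pderiv_X, add_mul, Finset.sum_add_distrib]
    congr 1
    · rw [Finset.sum_eq_single n]
      · simp
      · intro b _ hb; simp [Pi.single_apply, Ne.symm hb]
      · simp
    · rw [Finset.mul_sum]
      exact Finset.sum_congr rfl fun i _ => by ring

/-- restriction to the line `X = α, Z = σ Y + τ`; coordinates are `(Z, X, Y)`. -/
noncomputable def lnL {F : Type*} [Field F] (a : F × F × F) :
    MvPolynomial (Fin 3) F →ₐ[F] Polynomial F :=
  MvPolynomial.aeval ![Polynomial.C a.2.1 * Polynomial.X + Polynomial.C a.2.2, Polynomial.C a.1,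
    Polynomial.X]

/-- restriction to the line `Y = α, Z = σ X + τ`; coordinates are `(Z, X, Y)`. -/
noncomputable def lnM {F : Type*} [Field F] (a : F × F × F) :
    MvPolynomial (Fin 3) F →ₐ[F] Polynomial F :=
  MvPolynomial.aeval ![Polynomial.C a.2.1 * Polynomial.X + Polynomial.C a.2.2,
    Polynomial.X, Polynomial.C a.1]

/-- swap the `X` and `Y` variables -/
noncomputable def sw {F : Type*} [Field F] :
    MvPolynomial (Fin 3) F ≃ₐ[F] MvPolynomial (Fin 3) F :=
  MvPolynomial.renameEquiv F (Equiv.swap 1 2)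

section
variable {F : Type*} [Field F]

theorem lnM_eq (a : F × F × F) (P : MvPolynomial (Fin 3) F) : lnM a P = lnL a (sw P) := by
  have : lnM a = (lnL a).comp (sw (F := F)).toAlgHom := by
    apply MvPolynomial.algHom_ext
    intro i
    fin_cases i
    · simp [lnM, lnL, sw, Equiv.swap_apply_def]
    · simp [lnM, lnL, sw, Equiv.swap_apply_def]
    · simp [lnM, lnL, sw, Equiv.swap_apply_def]
  rw [this]; rfl

theorem sw_sw (P : MvPolynomial (Fin 3) F) : sw (sw P) = P := by
  have h : (⇑(Equiv.swap (1 : Fin 3) 2) ∘ ⇑(Equiv.swap (1 : Fin 3) 2)) = id := by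
    funext x; simp
  simp [sw, MvPolynomial.rename_rename, h]

theorem lnL_eq (a : F × F × F) (P : MvPolynomial (Fin 3) F) : lnL a P = lnM a (sw P) := by
  rw [lnM_eq, sw_sw]

theorem totalDegree_sw (P : MvPolynomial (Fin 3) F) : (sw P).totalDegree = P.totalDegree := by
  simp only [sw]
  exact MvPolynomial.totalDegree_renameEquiv _ _

theorem natDegree_aeval_le (f : Fin 3 → Polynomial F) (hf : ∀ i, (f i).natDegree ≤ 1)
    (P : MvPolynomial (Fin 3) F) :
    (MvPolynomial.aeval f P).natDegree ≤ P.totalDegree := by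
  rw [MvPolynomial.aeval_def, MvPolynomial.eval₂_eq]
  apply Polynomial.natDegree_sum_le_of_forall_le
  intro d hd
  refine (Polynomial.natDegree_C_mul_le _ _).trans ?_
  refine (Polynomial.natDegree_prod_le _ _).trans ?_
  refine le_trans ?_ (MvPolynomial.le_totalDegree hd)
  refine Finset.sum_le_sum fun i _ => ?_
  refine Polynomial.natDegree_pow_le.trans ?_
  nlinarith [hf i]

theorem natDegree_lnL_le (a : F × F × F) (P : MvPolynomial (Fin 3) F) :
    (lnL a P).natDegree ≤ P.totalDegree := by
  apply natDegree_aeval_le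
  intro i
  fin_cases i
  · exact Polynomial.natDegree_linear_le
  · simp
  · simp

theorem natDegree_lnM_le (a : F × F × F) (P : MvPolynomial (Fin 3) F) :
    (lnM a P).natDegree ≤ P.totalDegree := by
  rw [lnM_eq, ← totalDegree_sw P]; exact natDegree_lnL_le _ _

theorem eval_lnL (a : F × F × F) (P : MvPolynomial (Fin 3) F) (t : F) :
    (lnL a P).eval t = MvPolynomial.eval ![a.2.1 * t + a.2.2, a.1, t] P := by
  have : (Polynomial.aeval t).comp (lnL a) =
      (MvPolynomial.aeval ![a.2.1 * t + a.2.2, a.1, t] : _ →ₐ[F] F) := by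
    apply MvPolynomial.algHom_ext
    intro i
    fin_cases i <;> simp [lnL]
  have h := DFunLike.congr_fun this P
  simpa [Polynomial.coe_aeval_eq_eval, MvPolynomial.coe_aeval_eq_eval] using h

theorem eval_lnM (a : F × F × F) (P : MvPolynomial (Fin 3) F) (t : F) :
    (lnM a P).eval t = MvPolynomial.eval ![a.2.1 * t + a.2.2, t, a.1] P := by
  have : (Polynomial.aeval t).comp (lnM a) =
      (MvPolynomial.aeval ![a.2.1 * t + a.2.2, t, a.1] : _ →ₐ[F] F) := by
    apply MvPolynomial.algHom_ext
    intro i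
    fin_cases i <;> simp [lnM]
  have h := DFunLike.congr_fun this P
  simpa [Polynomial.coe_aeval_eq_eval, MvPolynomial.coe_aeval_eq_eval] using h

/-- the line `lnL a` meets the line `lnM b`. -/
def inc (a b : F × F × F) : Prop := a.1 * b.2.1 + b.2.2 = a.2.1 * b.1 + a.2.2

theorem eval_inc {a b : F × F × F} (h : inc a b) (P : MvPolynomial (Fin 3) F) :
    (lnL a P).eval b.1 = (lnM b P).eval a.1 := by
  rw [eval_lnL, eval_lnM]
  congr 2
  unfold inc at h
  simp [mul_comm b.2.1, h]

/-- The polynomial which vanishes on all lines of type L contained in `P = 0`. -/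
noncomputable def GG (P : MvPolynomial (Fin 3) F) : MvPolynomial (Fin 3) F :=
  let PZ := MvPolynomial.pderiv 0 P
  let PY := MvPolynomial.pderiv 2 P
  MvPolynomial.pderiv 2 PY * PZ ^ 2 - 2 * MvPolynomial.pderiv 2 PZ * PY * PZ
    + MvPolynomial.pderiv 0 PZ * PY ^ 2

noncomputable def GM (P : MvPolynomial (Fin 3) F) : MvPolynomial (Fin 3) F :=
  let PZ := MvPolynomial.pderiv 0 P
  let PX := MvPolynomial.pderiv 1 P
  MvPolynomial.pderiv 1 PX * PZ ^ 2 - 2 * MvPolynomial.pderiv 1 PZ * PX * PZ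
    + MvPolynomial.pderiv 0 PZ * PX ^ 2

theorem pderiv_comm3 (i j : Fin 3) (P : MvPolynomial (Fin 3) F) :
    MvPolynomial.pderiv i (MvPolynomial.pderiv j P) =
    MvPolynomial.pderiv j (MvPolynomial.pderiv i P) := by
  induction P using MvPolynomial.induction_on with
  | C a => simp
  | add p q hp hq => simp [hp, hq]
  | mul_X p n hp =>
    simp only [Derivation.leibniz, smul_eq_mul, map_add, hp]
    have : ∀ a b c : Fin 3, MvPolynomial.pderiv a
      (MvPolynomial.pderiv b (MvPolynomial.X c : MvPolynomial (Fin 3) F)) = 0 := by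
      intro a b c
      rw [MvPolynomial.pderiv_X, Pi.single_apply]
      split_ifs <;> simp
    simp only [this]; ring

theorem GM_sw (P : MvPolynomial (Fin 3) F) : GM P = sw (GG (sw P)) := by
  have h0 : ∀ Q : MvPolynomial (Fin 3) F,
      MvPolynomial.pderiv 0 (sw Q) = sw (MvPolynomial.pderiv 0 Q) := by
    intro Q
    have := MvPolynomial.pderiv_rename (R := F) (Equiv.swap (1 : Fin 3) 2).injective 0 Q
    rw [show (Equiv.swap (1 : Fin 3) 2) 0 = 0 by decide] at this
    simpa [sw] using this
  have h2 : ∀ Q : MvPolynomial (Fin 3) F,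
      MvPolynomial.pderiv 2 (sw Q) = sw (MvPolynomial.pderiv 1 Q) := by
    intro Q
    have := MvPolynomial.pderiv_rename (R := F) (Equiv.swap (1 : Fin 3) 2).injective 1 Q
    rw [show (Equiv.swap (1 : Fin 3) 2) 1 = 2 by decide] at this
    simpa [sw] using this
  simp only [GM, GG, h0, h2, map_add, map_sub, map_mul, map_pow, sw_sw, map_ofNat]

theorem deriv_lnL (a : F × F × F) (P : MvPolynomial (Fin 3) F) :
    Polynomial.derivative (lnL a P) =
      lnL a (MvPolynomial.pderiv 0 P) * Polynomial.C a.2.1 + lnL a (MvPolynomial.pderiv 2 P) := by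
  have := chain_rule (Polynomial.derivative' (R := F))
    ![Polynomial.C a.2.1 * Polynomial.X + Polynomial.C a.2.2, Polynomial.C a.1,
    Polynomial.X] P
  simp only [Polynomial.derivative'_apply, Fin.sum_univ_three] at this
  rw [lnL, this]
  simp

theorem GG_vanish (a : F × F × F) (P : MvPolynomial (Fin 3) F) (h : lnL a P = 0) :
    lnL a (GG P) = 0 := by
  have h1 := deriv_lnL a P
  have h2 := congrArg Polynomial.derivative h1
  simp only [h, map_zero, Polynomial.derivative_add, Polynomial.derivative_mul, deriv_lnL,
    Polynomial.derivative_C] at h1 h2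
  simp only [GG, map_add, map_sub, map_mul, map_pow, map_ofNat]
  rw [pderiv_comm3 0 2] at h2
  set A := lnL a (MvPolynomial.pderiv 0 P)
  have e : lnL a (MvPolynomial.pderiv 2 P) = - (A * Polynomial.C a.2.1) := by
    linear_combination -h1
  rw [e]
  linear_combination (-A ^ 2) * h2

theorem GM_vanish (a : F × F × F) (P : MvPolynomial (Fin 3) F) (h : lnM a P = 0) :
    lnM a (GM P) = 0 := by
  rw [lnM_eq] at h
  rw [GM_sw, ← lnL_eq]
  exact GG_vanish a _ h

theorem totalDegree_pderiv_le (i : Fin 3) (P : MvPolynomial (Fin 3) F) :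
    (MvPolynomial.pderiv i P).totalDegree ≤ P.totalDegree - 1 := by
  rw [MvPolynomial.totalDegree, Finset.sup_le_iff]
  intro m hm
  rw [MvPolynomial.mem_support_iff, MvPolynomial.coeff_pderiv] at hm
  have h1 : MvPolynomial.coeff (m + Finsupp.single i 1) P ≠ 0 := by
    intro h; simp [h] at hm
  have h2 := MvPolynomial.le_totalDegree (MvPolynomial.mem_support_iff.mpr h1)
  rw [Finsupp.sum_add_index' (by simp) (by simp)] at h2
  simp at h2
  omega

theorem totalDegree_GG_le (P : MvPolynomial (Fin 3) F) :
    (GG P).totalDegree ≤ 3 * P.totalDegree := by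
  have hd : ∀ i (Q : MvPolynomial (Fin 3) F), Q.totalDegree ≤ P.totalDegree →
      (MvPolynomial.pderiv i Q).totalDegree ≤ P.totalDegree := fun i Q hQ =>
    (totalDegree_pderiv_le i Q).trans (by omega)
  have h0 := hd 0 P le_rfl
  have h2 := hd 2 P le_rfl
  have h00 := hd 0 _ h0
  have h22 := hd 2 _ h2
  have h20 := hd 2 _ h0
  have hmul : ∀ (A B : MvPolynomial (Fin 3) F) (x y z : ℕ), A.totalDegree ≤ x → B.totalDegree ≤ y →
      x + y ≤ z → (A * B).totalDegree ≤ z := fun A B x y z hA hB hz =>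
    (MvPolynomial.totalDegree_mul A B).trans (by omega)
  have hpow : ∀ (A : MvPolynomial (Fin 3) F), A.totalDegree ≤ P.totalDegree →
      (A ^ 2).totalDegree ≤ 2 * P.totalDegree := fun A hA =>
    (MvPolynomial.totalDegree_pow A 2).trans (by omega)
  have h2c : (2 : MvPolynomial (Fin 3) F).totalDegree ≤ 0 := by
    have : (2 : MvPolynomial (Fin 3) F) = MvPolynomial.C 2 := (map_ofNat MvPolynomial.C 2).symm
    rw [this, MvPolynomial.totalDegree_C]
  refine (MvPolynomial.totalDegree_add _ _).trans (max_le ?_ ?_)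
  · refine (MvPolynomial.totalDegree_sub _ _).trans (max_le ?_ ?_)
    · exact hmul _ _ _ _ _ h22 (hpow _ h0) (by omega)
    · exact hmul _ _ _ _ _ (hmul _ _ _ _ _ (hmul _ _ _ _ _ h2c h20 le_rfl) h2 le_rfl) h0 (by omega)
  · exact hmul _ _ _ _ _ h00 (hpow _ h2) (by omega)

theorem totalDegree_GM_le (P : MvPolynomial (Fin 3) F) :
    (GM P).totalDegree ≤ 3 * P.totalDegree := by
  rw [GM_sw, totalDegree_sw, ← totalDegree_sw P]; exact totalDegree_GG_le _
end


section
variable {F : Type*} [Field F]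

theorem res_degree (f g : Polynomial (MvPolynomial (Fin 2) F)) (D E m n : ℕ)
    (hf : ∀ i, (f.coeff i).totalDegree ≤ D) (hg : ∀ i, (g.coeff i).totalDegree ≤ E) :
    (Polynomial.resultant f g m n).totalDegree ≤ m * E + n * D := by
  unfold Polynomial.resultant
  rw [Matrix.det_apply']
  apply MvPolynomial.totalDegree_finsetSum_le
  intro σ _
  refine (MvPolynomial.totalDegree_mul _ _).trans ?_
  have h1 : MvPolynomial.totalDegree
      (((Equiv.Perm.sign σ : ℤ) : MvPolynomial (Fin 2) F)) = 0 := by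
    rw [← map_intCast (MvPolynomial.C : F →+* MvPolynomial (Fin 2) F)]
    exact MvPolynomial.totalDegree_C _
  rw [h1, zero_add]
  refine (MvPolynomial.totalDegree_finsetProd _ _).trans ?_
  rw [Fin.sum_univ_add]
  gcongr
  · refine (Finset.sum_le_card_nsmul _ _ E ?_).trans (by simp)
    intro i _
    simp only [Polynomial.sylvester, Matrix.of_apply, Fin.addCases_left]
    split_ifs
    · exact hg _
    · simp
  · refine (Finset.sum_le_card_nsmul _ _ D ?_).trans (by simp)
    intro i _
    simp only [Polynomial.sylvester, Matrix.of_apply, Fin.addCases_right]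
    split_ifs
    · exact hf _
    · simp

theorem card_vanish (R : MvPolynomial (Fin 2) F) (hR : R ≠ 0) (A : Finset F)
    (h : ∀ α ∈ A, (MvPolynomial.aeval ![Polynomial.C α, Polynomial.X] R : Polynomial F) = 0) :
    A.card ≤ R.totalDegree := by
  classical
  set r := MvPolynomial.finSuccEquiv F 1 R with hr
  have hr0 : r ≠ 0 := by
    intro h0; exact hR ((MvPolynomial.finSuccEquiv F 1).injective (by rw [← hr, h0, map_zero]))
  have key : ∀ α : F, r.eval (MvPolynomial.C α) = Polynomial.aeval (MvPolynomial.X 0)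
      (MvPolynomial.aeval ![Polynomial.C α, Polynomial.X] R : Polynomial F) := by
    intro α
    have : ((Polynomial.aeval (R := MvPolynomial (Fin 1) F)
        (MvPolynomial.C α : MvPolynomial (Fin 1) F)).restrictScalars F).comp
        (MvPolynomial.finSuccEquiv F 1).toAlgHom =
        (Polynomial.aeval (MvPolynomial.X 0 : MvPolynomial (Fin 1) F)).comp
        (MvPolynomial.aeval ![Polynomial.C α, Polynomial.X]) := by
      apply MvPolynomial.algHom_ext
      intro i
      refine Fin.cases ?_ (fun j => ?_) i
      · simp [MvPolynomial.finSuccEquiv_X_zero]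
      · have : j = 0 := Subsingleton.elim _ _
        subst this
        have e := MvPolynomial.finSuccEquiv_X_succ (R := F) (n := 1) (j := 0)
        have e1 : (Fin.succ 0 : Fin 2) = 1 := rfl
        rw [e1] at e
        simp [e]
    have := DFunLike.congr_fun this R
    simpa [Polynomial.coe_aeval_eq_eval] using this
  have hsub : A.image (MvPolynomial.C (σ := Fin 1)) ⊆ r.roots.toFinset := by
    intro x hx
    obtain ⟨α, hα, rfl⟩ := Finset.mem_image.1 hx
    rw [Multiset.mem_toFinset, Polynomial.mem_roots hr0, Polynomial.IsRoot, key, h α hα, map_zero]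
  calc A.card = (A.image (MvPolynomial.C (σ := Fin 1))).card :=
        (Finset.card_image_of_injective _ (MvPolynomial.C_injective _ _)).symm
    _ ≤ r.roots.toFinset.card := Finset.card_le_card hsub
    _ ≤ Multiset.card r.roots := Multiset.toFinset_card_le _
    _ ≤ r.natDegree := Polynomial.card_roots' _
    _ = R.degreeOf 0 := MvPolynomial.natDegree_finSuccEquiv _
    _ ≤ _ := MvPolynomial.degreeOf_le_totalDegree _ _

theorem coeff_fse_le (P : MvPolynomial (Fin 3) F) (i : ℕ) :
    ((MvPolynomial.finSuccEquiv F 2 P).coeff i).totalDegree ≤ P.totalDegree := by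
  by_cases h : (MvPolynomial.finSuccEquiv F 2 P).coeff i = 0
  · rw [h]; simp
  · have := MvPolynomial.totalDegree_coeff_finSuccEquiv_add_le P i h
    omega

theorem lnL_fse (a : F × F × F) (P : MvPolynomial (Fin 3) F) :
    (MvPolynomial.finSuccEquiv F 2 P).eval₂
      (MvPolynomial.aeval ![Polynomial.C a.1, Polynomial.X] : _ →ₐ[F] Polynomial F).toRingHom
      (Polynomial.C a.2.1 * Polynomial.X + Polynomial.C a.2.2) = lnL a P := by
  induction P using MvPolynomial.induction_on with
  | C x => simp [lnL, MvPolynomial.finSuccEquiv_apply]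
  | add p q hp hq => rw [map_add, map_add, Polynomial.eval₂_add, hp, hq]
  | mul_X p n hp =>
    rw [map_mul, map_mul, Polynomial.eval₂_mul, hp]
    congr 1
    refine Fin.cases ?_ (fun j => ?_) n
    · simp [lnL, MvPolynomial.finSuccEquiv_X_zero]
    · rw [MvPolynomial.finSuccEquiv_X_succ]
      fin_cases j <;> simp [lnL]

theorem bezout_L (P Q : MvPolynomial (Fin 3) F) (hP : Irreducible P)
    (hZ : MvPolynomial.degreeOf 0 P ≠ 0) (hPQ : ¬ P ∣ Q) (A : Finset (F × F × F))
    (hA : Set.InjOn (fun a : F × F × F => a.1) A)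
    (h1 : ∀ a ∈ A, lnL a P = 0) (h2 : ∀ a ∈ A, lnL a Q = 0) :
    A.card ≤ 2 * P.totalDegree * Q.totalDegree := by
  classical
  set p := MvPolynomial.finSuccEquiv F 2 P with hp
  set q := MvPolynomial.finSuccEquiv F 2 Q with hq
  have hpi : Irreducible p := (MulEquiv.irreducible_iff (MvPolynomial.finSuccEquiv F 2)).2 hP
  have hpn : p.natDegree ≠ 0 := by rwa [hp, MvPolynomial.natDegree_finSuccEquiv]
  have hpq : ¬ p ∣ q := by
    intro h; exact hPQ ((map_dvd_iff (MvPolynomial.finSuccEquiv F 2)).1 h)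
  have hprim : p.IsPrimitive := hpi.isPrimitive hpn
  letI : NormalizedGCDMonoid (MvPolynomial (Fin 2) F) :=
    Classical.choice inferInstance
  set K := FractionRing (MvPolynomial (Fin 2) F)
  have hpK : Irreducible (p.map (algebraMap _ K)) :=
    (hprim.irreducible_iff_irreducible_map_fraction_map).1 hpi
  have hpqK : ¬ (p.map (algebraMap _ K)) ∣ (q.map (algebraMap _ K)) := fun h =>
    hpq (hprim.dvd_of_fraction_map_dvd_fraction_map h)
  have hcop : IsCoprime (p.map (algebraMap _ K)) (q.map (algebraMap _ K)) :=
    (hpK.coprime_iff_not_dvd).2 hpqK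
  have hres : Polynomial.resultant p q ≠ 0 := by
    intro h0
    have h3 : Polynomial.resultant (p.map (algebraMap _ K)) (q.map (algebraMap _ K)) ≠ 0 := by
      rw [Ne, Polynomial.resultant_eq_zero_iff]
      tauto
    apply h3
    have := Polynomial.resultant_map_map p q p.natDegree q.natDegree (algebraMap (MvPolynomial (Fin 2) F) K)
    rw [h0, map_zero] at this
    rw [Polynomial.natDegree_map_eq_of_injective (IsFractionRing.injective _ K),
      Polynomial.natDegree_map_eq_of_injective (IsFractionRing.injective _ K)]
    exact this
  obtain ⟨u, v, -, -, huv⟩ := Polynomial.exists_mul_add_mul_eq_C_resultant p q le_rfl le_rfl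
    (Or.inl hpn)
  have h3 := card_vanish _ hres (A.image fun a => a.1) (by
    intro α hα
    obtain ⟨a, ha, rfl⟩ := Finset.mem_image.1 hα
    have h4 := congrArg (Polynomial.eval₂
      (MvPolynomial.aeval ![Polynomial.C a.1, Polynomial.X] : _ →ₐ[F] Polynomial F).toRingHom
      (Polynomial.C a.2.1 * Polynomial.X + Polynomial.C a.2.2)) huv
    rw [Polynomial.eval₂_add, Polynomial.eval₂_mul, Polynomial.eval₂_mul, lnL_fse, lnL_fse,
      h1 a ha, h2 a ha, Polynomial.eval₂_C] at h4
    simpa using h4.symm)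
  rw [Finset.card_image_of_injOn hA] at h3
  refine h3.trans ((res_degree p q P.totalDegree Q.totalDegree _ _ (coeff_fse_le P)
    (coeff_fse_le Q)).trans ?_)
  have e1 : p.natDegree ≤ P.totalDegree := by
    rw [hp, MvPolynomial.natDegree_finSuccEquiv]; exact MvPolynomial.degreeOf_le_totalDegree _ _
  have e2 : q.natDegree ≤ Q.totalDegree := by
    rw [hq, MvPolynomial.natDegree_finSuccEquiv]; exact MvPolynomial.degreeOf_le_totalDegree _ _
  nlinarith

theorem degreeOf_zero_sw (P : MvPolynomial (Fin 3) F) :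
    MvPolynomial.degreeOf 0 (sw P) = MvPolynomial.degreeOf 0 P := by
  have := MvPolynomial.degreeOf_rename_of_injective (p := P) (Equiv.swap (1 : Fin 3) 2).injective 0
  rw [Equiv.swap_apply_of_ne_of_ne (by decide) (by decide)] at this
  exact this

theorem bezout_M (P Q : MvPolynomial (Fin 3) F) (hP : Irreducible P)
    (hZ : MvPolynomial.degreeOf 0 P ≠ 0) (hPQ : ¬ P ∣ Q) (A : Finset (F × F × F))
    (hA : Set.InjOn (fun a : F × F × F => a.1) A)
    (h1 : ∀ a ∈ A, lnM a P = 0) (h2 : ∀ a ∈ A, lnM a Q = 0) :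
    A.card ≤ 2 * P.totalDegree * Q.totalDegree := by
  rw [← totalDegree_sw P, ← totalDegree_sw Q]
  apply bezout_L (sw P) (sw Q) _ _ _ A hA
  · intro a ha; rw [← lnM_eq]; exact h1 a ha
  · intro a ha; rw [← lnM_eq]; exact h2 a ha
  · exact (MulEquiv.irreducible_iff sw).2 hP
  · rwa [degreeOf_zero_sw]
  · rwa [map_dvd_iff]
end


section
variable {F : Type*} [Field F]

theorem ode_uniq {R : Type*} [CommRing R] [IsDomain R] (q u a b : Polynomial R)
    (h : u * Polynomial.derivative (Polynomial.derivative q) = a * q + b * Polynomial.derivative q)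
    (hu : u.coeff 0 ≠ 0) (h0 : q.coeff 0 = 0) (h1 : q.coeff 1 = 0)
    (hk : ∀ k : ℕ, 0 < k → k ≤ q.natDegree → (k : R) ≠ 0) : q = 0 := by
  ext n
  rw [Polynomial.coeff_zero]
  induction n using Nat.strong_induction_on with
  | _ n ih =>
    by_cases hn : q.natDegree < n
    · exact Polynomial.coeff_eq_zero_of_natDegree_lt hn
    match n, ih, hn with
    | 0, _, _ => exact h0
    | 1, _, _ => exact h1
    | n + 2, ih, hn =>
      have h2 := congrArg (fun r => Polynomial.coeff r n) h
      simp only [Polynomial.coeff_add, Polynomial.coeff_mul, Polynomial.coeff_derivative] at h2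
      rw [Finset.sum_eq_single (0, n)] at h2
      · rw [Finset.sum_eq_zero, Finset.sum_eq_zero] at h2
        · have e1 := hk (n + 1) (by omega) (by omega)
          have e2 := hk (n + 2) (by omega) (by omega)
          push_cast at e1 e2 h2
          have e3 : u.coeff 0 * (q.coeff (n + 2)) * ((n : R) + 1) * ((n : R) + 2) = 0 := by
            rw [add_zero] at h2
            rw [← h2]; ring
          simp only [mul_eq_zero] at e3
          tauto
        · rintro ⟨i, j⟩ hij
          rw [Finset.HasAntidiagonal.mem_antidiagonal] at hij
          simp only at hij
          simp [ih (j + 1) (by omega)]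
        · rintro ⟨i, j⟩ hij
          rw [Finset.HasAntidiagonal.mem_antidiagonal] at hij
          simp only at hij
          simp [ih j (by omega)]
      · rintro ⟨i, j⟩ hij hne
        rw [Finset.HasAntidiagonal.mem_antidiagonal] at hij
        simp only at hij
        have : j ≠ n := by
          rintro rfl
          apply hne
          ext <;> simp; omega
        simp [ih (j + 1 + 1) (by omega)]
      · simp

theorem ode_L {S : Type*} [CommRing S] [Algebra F S] (D : Derivation F S S)
    (f : Fin 3 → S) (P : MvPolynomial (Fin 3) F) (hP : P ∣ GG P)
    (h0 : D (D (f 0)) = 0) (h1 : D (f 1) = 0) (h2 : D (f 2) = 1) :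
    ∃ A b, (MvPolynomial.aeval f (MvPolynomial.pderiv 0 P)) ^ 2 * D (D (MvPolynomial.aeval f P)) =
      A * MvPolynomial.aeval f P + b * D (MvPolynomial.aeval f P) := by
  obtain ⟨Q, hQ⟩ := hP
  have hQ' := congrArg (MvPolynomial.aeval f) hQ
  simp only [GG, map_add, map_sub, map_mul, map_pow, map_ofNat] at hQ'
  have e1 : ∀ R : MvPolynomial (Fin 3) F, D (MvPolynomial.aeval f R) = MvPolynomial.aeval f (MvPolynomial.pderiv 0 R) * D (f 0)
      + MvPolynomial.aeval f (MvPolynomial.pderiv 2 R) := by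
    intro R
    rw [chain_rule D f R, Fin.sum_univ_three, h1, h2]; ring
  have e2 := congrArg D (e1 P)
  simp only [map_add, Derivation.leibniz, smul_eq_mul, e1 (MvPolynomial.pderiv 0 P),
    e1 (MvPolynomial.pderiv 2 P), h0, pderiv_comm3 0 2 P] at e2
  have e3 := e1 P
  set p := MvPolynomial.aeval f P
  set PZ := MvPolynomial.aeval f (MvPolynomial.pderiv 0 P)
  set PY := MvPolynomial.aeval f (MvPolynomial.pderiv 2 P)
  set PZZ := MvPolynomial.aeval f (MvPolynomial.pderiv 0 (MvPolynomial.pderiv 0 P))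
  set PYY := MvPolynomial.aeval f (MvPolynomial.pderiv 2 (MvPolynomial.pderiv 2 P))
  set PZY := MvPolynomial.aeval f (MvPolynomial.pderiv 2 (MvPolynomial.pderiv 0 P))
  refine ⟨MvPolynomial.aeval f Q, PZZ * (D p - 2 * PY) + 2 * PZY * PZ, ?_⟩
  rw [e2]
  have e4 : PY = D p - PZ * D (f 0) := by rw [e3]; ring
  rw [e4] at hQ' ⊢
  linear_combination hQ'

theorem ode_M {S : Type*} [CommRing S] [Algebra F S] (D : Derivation F S S)
    (f : Fin 3 → S) (P : MvPolynomial (Fin 3) F) (hP : P ∣ GM P)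
    (h0 : D (D (f 0)) = 0) (h1 : D (f 2) = 0) (h2 : D (f 1) = 1) :
    ∃ A b, (MvPolynomial.aeval f (MvPolynomial.pderiv 0 P)) ^ 2 * D (D (MvPolynomial.aeval f P)) =
      A * MvPolynomial.aeval f P + b * D (MvPolynomial.aeval f P) := by
  obtain ⟨Q, hQ⟩ := hP
  have hQ' := congrArg (MvPolynomial.aeval f) hQ
  simp only [GM, map_add, map_sub, map_mul, map_pow, map_ofNat] at hQ'
  have e1 : ∀ R : MvPolynomial (Fin 3) F, D (MvPolynomial.aeval f R) = MvPolynomial.aeval f (MvPolynomial.pderiv 0 R) * D (f 0)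
      + MvPolynomial.aeval f (MvPolynomial.pderiv 1 R) := by
    intro R
    rw [chain_rule D f R, Fin.sum_univ_three, h1, h2]; ring
  have e2 := congrArg D (e1 P)
  simp only [map_add, Derivation.leibniz, smul_eq_mul, e1 (MvPolynomial.pderiv 0 P),
    e1 (MvPolynomial.pderiv 1 P), h0, pderiv_comm3 0 1 P] at e2
  have e3 := e1 P
  set p := MvPolynomial.aeval f P
  set PZ := MvPolynomial.aeval f (MvPolynomial.pderiv 0 P)
  set PY := MvPolynomial.aeval f (MvPolynomial.pderiv 1 P)
  set PZZ := MvPolynomial.aeval f (MvPolynomial.pderiv 0 (MvPolynomial.pderiv 0 P))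
  set PYY := MvPolynomial.aeval f (MvPolynomial.pderiv 1 (MvPolynomial.pderiv 1 P))
  set PZY := MvPolynomial.aeval f (MvPolynomial.pderiv 1 (MvPolynomial.pderiv 0 P))
  refine ⟨MvPolynomial.aeval f Q, PZZ * (D p - 2 * PY) + 2 * PZY * PZ, ?_⟩
  rw [e2]
  have e4 : PY = D p - PZ * D (f 0) := by rw [e3]; ring
  rw [e4] at hQ' ⊢
  linear_combination hQ'

noncomputable def Dt : Derivation F (Polynomial (Polynomial F)) (Polynomial (Polynomial F)) :=
  (Polynomial.derivative' (R := Polynomial F)).restrictScalars F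

theorem Dt_apply (q : Polynomial (Polynomial F)) : Dt q = Polynomial.derivative q := rfl


/-- derivative of the coefficients, as a function -/
noncomputable def DsFun (q : Polynomial (Polynomial F)) : Polynomial (Polynomial F) :=
  Polynomial.ofFinsupp (AddMonoidAlgebra.ofCoeff
    (Finsupp.mapRange Polynomial.derivative (map_zero _) q.toFinsupp.coeff))

theorem coeff_DsFun (q : Polynomial (Polynomial F)) (n : ℕ) :
    (DsFun q).coeff n = Polynomial.derivative (q.coeff n) := by
  cases q
  rfl

/-- derivative of the coefficients -/
noncomputable def Ds : Derivation F (Polynomial (Polynomial F)) (Polynomial (Polynomial F)) where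
  toFun := DsFun
  map_add' p q := by
    ext1 n; simp [coeff_DsFun]
  map_smul' c q := by
    ext1 n; simp [coeff_DsFun]
  map_one_eq_zero' := by
    ext1 n
    change (DsFun 1).coeff n = 0
    rw [coeff_DsFun, Polynomial.coeff_one]
    split_ifs <;> simp
  leibniz' p q := by
    ext1 n
    change (DsFun (p * q)).coeff n = (p * DsFun q + q * DsFun p).coeff n
    rw [mul_comm q (DsFun p), Polynomial.coeff_add, coeff_DsFun, Polynomial.coeff_mul,
      Polynomial.coeff_mul, Polynomial.coeff_mul, Polynomial.derivative_sum,
      ← Finset.sum_add_distrib]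
    refine Finset.sum_congr rfl fun x _ => ?_
    rw [Polynomial.derivative_mul, coeff_DsFun, coeff_DsFun]; ring

theorem coeff_Ds (q : Polynomial (Polynomial F)) (n : ℕ) :
    (Ds q).coeff n = Polynomial.derivative (q.coeff n) := coeff_DsFun q n

theorem Ds_C (q : Polynomial F) : Ds (Polynomial.C q) = Polynomial.C (Polynomial.derivative q) := by
  ext1 n
  rw [coeff_Ds, Polynomial.coeff_C, Polynomial.coeff_C]
  split_ifs <;> simp

theorem Ds_X : Ds (Polynomial.X : Polynomial (Polynomial F)) = 0 := by
  ext1 n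
  rw [coeff_Ds, Polynomial.coeff_X]
  split_ifs <;> simp

theorem Dt_C (q : Polynomial F) : Dt (Polynomial.C q) = 0 := by
  rw [Dt_apply, Polynomial.derivative_C]

theorem Dt_X : Dt (Polynomial.X : Polynomial (Polynomial F)) = 1 := by
  rw [Dt_apply, Polynomial.derivative_X]

theorem sd_prod {ι : Type*} (s : Finset ι) (f : ι → Polynomial (Polynomial F)) (d : ι → ℕ)
    (h : ∀ i ∈ s, ∀ n, ((f i).coeff n).natDegree ≤ d i) (n : ℕ) :
    ((∏ i ∈ s, f i).coeff n).natDegree ≤ ∑ i ∈ s, d i := by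
  classical
  induction s using Finset.induction_on generalizing n with
  | empty => 
    rw [Finset.prod_empty, Polynomial.coeff_one]
    split_ifs <;> simp
  | insert a s ha ih =>
    rw [Finset.prod_insert ha, Finset.sum_insert ha, Polynomial.coeff_mul]
    apply Polynomial.natDegree_sum_le_of_forall_le
    intro x _
    refine Polynomial.natDegree_mul_le.trans ?_
    gcongr
    · exact h a (by simp) _
    · exact ih (fun i hi => h i (by simp [hi])) _

theorem sd_pow (f : Polynomial (Polynomial F)) (h : ∀ n, (f.coeff n).natDegree ≤ 1) (k n : ℕ) :
    ((f ^ k).coeff n).natDegree ≤ k := by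
  have := sd_prod (Finset.range k) (fun _ => f) (fun _ => 1) (fun i _ => h) n
  simpa using this

theorem sd_aeval (f : Fin 3 → Polynomial (Polynomial F))
    (h : ∀ i n, ((f i).coeff n).natDegree ≤ 1) (P : MvPolynomial (Fin 3) F) (n : ℕ) :
    ((MvPolynomial.aeval f P).coeff n).natDegree ≤ P.totalDegree := by
  rw [MvPolynomial.aeval_def, MvPolynomial.eval₂_eq, Polynomial.finset_sum_coeff]
  apply Polynomial.natDegree_sum_le_of_forall_le
  intro d hd
  rw [Polynomial.algebraMap_apply, Polynomial.coeff_C_mul, Polynomial.algebraMap_apply]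
  refine (Polynomial.natDegree_C_mul_le _ _).trans ?_
  refine le_trans ?_ (MvPolynomial.le_totalDegree hd)
  exact sd_prod _ _ _ (fun i _ => sd_pow _ (h i) _) n

theorem td_aeval (f : Fin 3 → Polynomial (Polynomial F))
    (h : ∀ i, (f i).natDegree ≤ 1) (P : MvPolynomial (Fin 3) F) :
    (MvPolynomial.aeval f P).natDegree ≤ P.totalDegree := by
  rw [MvPolynomial.aeval_def, MvPolynomial.eval₂_eq]
  apply Polynomial.natDegree_sum_le_of_forall_le
  intro d hd
  rw [Polynomial.algebraMap_apply]
  refine (Polynomial.natDegree_C_mul_le _ _).trans ?_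
  refine (Polynomial.natDegree_prod_le _ _).trans ?_
  refine le_trans ?_ (MvPolynomial.le_totalDegree hd)
  refine Finset.sum_le_sum fun i _ => ?_
  refine Polynomial.natDegree_pow_le.trans ?_
  nlinarith [h i]

theorem dvd_sub_aeval (φ : MvPolynomial (Fin 3) F) (P : MvPolynomial (Fin 3) F) :
    (MvPolynomial.X 0 - φ) ∣
      P - MvPolynomial.aeval ![φ, MvPolynomial.X 1, MvPolynomial.X 2] P := by
  induction P using MvPolynomial.induction_on with
  | C x => simp
  | add p q hp hq =>
    rw [map_add, add_sub_add_comm]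
    exact dvd_add hp hq
  | mul_X p n hp =>
    rw [map_mul, MvPolynomial.aeval_X]
    have e : (MvPolynomial.X 0 - φ) ∣ MvPolynomial.X n - ![φ, MvPolynomial.X 1, MvPolynomial.X 2] n := by
      fin_cases n <;> simp
    exact dvd_mul_sub_mul hp e

/-- two-variable uniqueness -/
theorem ode2 (p u A b u' A' b' : Polynomial (Polynomial F)) (N : ℕ)
    (hN : ∀ k : ℕ, 0 < k → k ≤ N → (k : F) ≠ 0)
    (ht : u * Dt (Dt p) = A * p + b * Dt p) (hs : u' * Ds (Ds p) = A' * p + b' * Ds p)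
    (hu : (u.coeff 0).coeff 0 ≠ 0) (hu' : (u'.coeff 0).coeff 0 ≠ 0)
    (d1 : p.natDegree ≤ N) (d2 : ∀ n, (p.coeff n).natDegree ≤ N)
    (z1 : (p.coeff 0).coeff 0 = 0) (z2 : ((Dt p).coeff 0).coeff 0 = 0)
    (z3 : ((Ds p).coeff 0).coeff 0 = 0) (z4 : ((Ds (Dt p)).coeff 0).coeff 0 = 0) : p = 0 := by
  have h0 : p.coeff 0 = 0 := by
    apply ode_uniq (p.coeff 0) (u'.coeff 0) (A'.coeff 0) (b'.coeff 0) _ hu' z1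
    · rw [coeff_Ds, Polynomial.coeff_derivative] at z3
      simpa using z3
    · exact fun k h1 h2 => hN k h1 (h2.trans (d2 0))
    · have := congrArg (fun r => Polynomial.coeff r 0) hs
      simpa only [Polynomial.mul_coeff_zero, Polynomial.coeff_add, coeff_Ds] using this
  have h1 : p.coeff 1 = 0 := by
    rw [Dt_apply, Polynomial.coeff_derivative] at z2
    rw [coeff_Ds, Dt_apply, Polynomial.coeff_derivative] at z4
    apply ode_uniq (p.coeff 1) (u'.coeff 0) (A'.coeff 0) (b'.coeff 0) _ hu' (by simpa using z2)
    · rw [Polynomial.coeff_derivative] at z4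
      simpa using z4
    · exact fun k h1 h2 => hN k h1 (h2.trans (d2 1))
    · have := congrArg (fun r => Polynomial.coeff r 1) hs
      simpa [Polynomial.coeff_mul, coeff_Ds, h0, Finset.Nat.antidiagonal_succ] using this
  apply ode_uniq p u A b ht _ h0 h1
  · intro k e1 e2 e3
    apply hN k e1 (e2.trans d1)
    have := congrArg (fun r => Polynomial.coeff r 0) e3
    simpa using this
  · intro h; rw [h] at hu; simp at hu

end


section
variable {F : Type*} [Field F]

theorem ev00 (f : Fin 3 → Polynomial (Polynomial F)) (v : Fin 3 → F)
    (hf : ∀ i, ((f i).coeff 0).coeff 0 = v i) (P : MvPolynomial (Fin 3) F) :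
    ((MvPolynomial.aeval f P).coeff 0).coeff 0 = MvPolynomial.eval v P := by
  induction P using MvPolynomial.induction_on with
  | C x => simp [Polynomial.algebraMap_apply]
  | add p q hp hq => simp [hp, hq]
  | mul_X p n hp => simp [hp, hf, Polynomial.mul_coeff_zero]

theorem ev00_mul (p q : Polynomial (Polynomial F)) :
    ((p * q).coeff 0).coeff 0 = (p.coeff 0).coeff 0 * (q.coeff 0).coeff 0 := by
  simp [Polynomial.mul_coeff_zero]

theorem Ds_lin (a b : Polynomial F) :
    Ds (Polynomial.C a + Polynomial.C b * Polynomial.X : Polynomial (Polynomial F)) =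
    Polynomial.C (Polynomial.derivative a) + Polynomial.C (Polynomial.derivative b) * Polynomial.X := by
  rw [Derivation.map_add, Derivation.leibniz, Ds_C, Ds_C, Ds_X, smul_eq_mul, smul_eq_mul,
      mul_zero, zero_add, mul_comm Polynomial.X]

set_option maxHeartbeats 1000000 in
theorem classify_aux (P : MvPolynomial (Fin 3) F)
    (hdeg : ∀ k : ℕ, 0 < k → k ≤ P.totalDegree → (k : F) ≠ 0)
    (hG : P ∣ GG P) (hM : P ∣ GM P) (v : Fin 3 → F) (hv : MvPolynomial.eval v P = 0)
    (hvz : MvPolynomial.eval v (MvPolynomial.pderiv 0 P) ≠ 0) :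
    ∃ e1 e2 w : F, (MvPolynomial.aeval ![Polynomial.C (Polynomial.C (v 0) + Polynomial.C e1 * Polynomial.X) +
      Polynomial.C (Polynomial.C e2 + Polynomial.C w * Polynomial.X) * Polynomial.X,
      Polynomial.C (Polynomial.C (v 1) + Polynomial.X),
      Polynomial.C (Polynomial.C (v 2)) + Polynomial.X] P : Polynomial (Polynomial F)) = 0 := by
  set PZ := MvPolynomial.eval v (MvPolynomial.pderiv 0 P) with hPZ
  set PX := MvPolynomial.eval v (MvPolynomial.pderiv 1 P) with hPX
  set PY := MvPolynomial.eval v (MvPolynomial.pderiv 2 P) with hPY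
  set e1 : F := - PX / PZ with he1
  set e2 : F := - PY / PZ with he2
  set PZZ := MvPolynomial.eval v (MvPolynomial.pderiv 0 (MvPolynomial.pderiv 0 P)) with hPZZ
  set PZX := MvPolynomial.eval v (MvPolynomial.pderiv 1 (MvPolynomial.pderiv 0 P)) with hPZX
  set PYZ := MvPolynomial.eval v (MvPolynomial.pderiv 0 (MvPolynomial.pderiv 2 P)) with hPYZ
  set PYX := MvPolynomial.eval v (MvPolynomial.pderiv 1 (MvPolynomial.pderiv 2 P)) with hPYX
  set w : F := - ((PZZ * e1 + PZX) * e2 + (PYZ * e1 + PYX)) / PZ with hw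
  refine ⟨e1, e2, w, ?_⟩
  set f : Fin 3 → Polynomial (Polynomial F) := ![Polynomial.C (Polynomial.C (v 0) + Polynomial.C e1 * Polynomial.X) +
      Polynomial.C (Polynomial.C e2 + Polynomial.C w * Polynomial.X) * Polynomial.X,
      Polynomial.C (Polynomial.C (v 1) + Polynomial.X),
      Polynomial.C (Polynomial.C (v 2)) + Polynomial.X] with hf
  have hf0 : ∀ i, ((f i).coeff 0).coeff 0 = v i := by
    intro i; fin_cases i <;> simp [hf, Polynomial.mul_coeff_zero]
  have t0 : Dt (f 0) = Polynomial.C (Polynomial.C e2 + Polynomial.C w * Polynomial.X) := by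
    simp [hf, Dt_apply]
  have t1 : Dt (f 1) = 0 := by simp [hf, Dt_apply]
  have t2 : Dt (f 2) = 1 := by simp [hf, Dt_apply]
  have s0 : Ds (f 0) = Polynomial.C (Polynomial.C e1) +
      Polynomial.C (Polynomial.C w) * Polynomial.X := by
    change Ds (Polynomial.C (Polynomial.C (v 0) + Polynomial.C e1 * Polynomial.X) +
      Polynomial.C (Polynomial.C e2 + Polynomial.C w * Polynomial.X) * Polynomial.X) = _
    rw [Ds_lin]
    simp
  have s1 : Ds (f 1) = 1 := by simp [hf, Ds_C, -map_add]
  have s2 : Ds (f 2) = 0 := by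
    simp only [hf, Matrix.cons_val, map_add, Ds_C, Ds_X]
    simp
  have t00 : Dt (Dt (f 0)) = 0 := by rw [t0, Dt_C]
  have s00 : Ds (Ds (f 0)) = 0 := by
    rw [s0]
    simp only [map_add, Derivation.leibniz, Ds_C, Ds_X, smul_eq_mul]
    simp
  have st0 : Ds (Dt (f 0)) = Polynomial.C (Polynomial.C w) := by
    rw [t0, Ds_C]; simp
  obtain ⟨A, b, hA⟩ := ode_L Dt f P hG t00 t1 t2
  obtain ⟨A', b', hA'⟩ := ode_M Ds f P hM s00 s2 s1
  have hZ0 : (((MvPolynomial.aeval f (MvPolynomial.pderiv 0 P)) ^ 2).coeff 0).coeff 0 ≠ 0 := by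
    rw [sq, ev00_mul, ev00 f v hf0]
    exact mul_ne_zero hvz hvz
  have ct : ∀ R : MvPolynomial (Fin 3) F, Dt (MvPolynomial.aeval f R) =
      MvPolynomial.aeval f (MvPolynomial.pderiv 0 R) * Dt (f 0)
      + MvPolynomial.aeval f (MvPolynomial.pderiv 2 R) := by
    intro R
    rw [chain_rule Dt f R, Fin.sum_univ_three, t1, t2]; ring
  have cs : ∀ R : MvPolynomial (Fin 3) F, Ds (MvPolynomial.aeval f R) =
      MvPolynomial.aeval f (MvPolynomial.pderiv 0 R) * Ds (f 0)
      + MvPolynomial.aeval f (MvPolynomial.pderiv 1 R) := by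
    intro R
    rw [chain_rule Ds f R, Fin.sum_univ_three, s1, s2]; ring
  have q1 : ((Dt (f 0)).coeff 0).coeff 0 = e2 := by rw [t0]; simp
  have q2 : ((Ds (f 0)).coeff 0).coeff 0 = e1 := by rw [s0]; simp
  have q3 : ((Ds (Dt (f 0))).coeff 0).coeff 0 = w := by rw [st0]; simp
  apply ode2 _ _ A b _ A' b' P.totalDegree hdeg hA hA' hZ0 hZ0
  · apply td_aeval
    intro i
    fin_cases i
    · simp only [hf]
      exact (Polynomial.natDegree_add_le _ _).trans (by
        rw [Polynomial.natDegree_C]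
        have := Polynomial.natDegree_C_mul_X_pow_le (Polynomial.C e2 + Polynomial.C w * Polynomial.X) 1
        rw [pow_one] at this
        simpa using this)
    · simp [hf, -map_add]
    · simp only [hf]
      exact (Polynomial.natDegree_add_le _ _).trans (by simp)
  · apply sd_aeval
    intro i n
    have g1 : ∀ x y : F, (Polynomial.C x + Polynomial.C y * Polynomial.X).natDegree ≤ 1 := by
      intro x y
      rw [add_comm]; exact Polynomial.natDegree_linear_le
    fin_cases i
    · simp only [hf]
      change (Polynomial.coeff (Polynomial.C _ + Polynomial.C _ * Polynomial.X : Polynomial (Polynomial F)) n).natDegree ≤ 1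
      rw [Polynomial.coeff_add, Polynomial.coeff_C]
      rw [Polynomial.coeff_C_mul, Polynomial.coeff_X]
      split_ifs with c1 c2 c2
      · omega
      · rw [mul_zero, add_zero]; exact g1 _ _
      · rw [mul_one, zero_add]; exact g1 _ _
      · simp
    · change (Polynomial.coeff (Polynomial.C _ : Polynomial (Polynomial F)) n).natDegree ≤ 1
      have := g1 (v 1) 1
      rw [map_one, one_mul] at this
      rw [Polynomial.coeff_C]
      split_ifs
      · exact this
      · simp
    · change (Polynomial.coeff (Polynomial.C _ + Polynomial.X : Polynomial (Polynomial F)) n).natDegree ≤ 1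
      rw [Polynomial.coeff_add, Polynomial.coeff_C, Polynomial.coeff_X]
      refine (Polynomial.natDegree_add_le _ _).trans ?_
      split_ifs <;> simp
  · rw [ev00 f v hf0, hv]
  · rw [ct, Polynomial.coeff_add, Polynomial.coeff_add, ev00_mul, ev00 f v hf0, ev00 f v hf0, q1,
      he2, ← hPZ, ← hPY]
    field_simp; ring
  · rw [cs, Polynomial.coeff_add, Polynomial.coeff_add, ev00_mul, ev00 f v hf0, ev00 f v hf0, q2,
      he1, ← hPZ, ← hPX]
    field_simp; ring
  · rw [ct, map_add, Derivation.leibniz, smul_eq_mul, smul_eq_mul, cs, cs]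
    simp only [Polynomial.coeff_add, ev00_mul, ev00 f v hf0, q1, q2, q3]
    rw [← hPZ, ← hPZZ, ← hPZX, ← hPYZ, ← hPYX, hw]
    field_simp; ring

theorem classify (P : MvPolynomial (Fin 3) F) (hP : Irreducible P)
    (hdeg : ∀ k : ℕ, 0 < k → k ≤ P.totalDegree → (k : F) ≠ 0)
    (hG : P ∣ GG P) (hM : P ∣ GM P) (v : Fin 3 → F) (hv : MvPolynomial.eval v P = 0)
    (hvz : MvPolynomial.eval v (MvPolynomial.pderiv 0 P) ≠ 0) :
    ∃ w β γ δ : F, (∀ a, lnL a P = 0 → a.2.1 = w * a.1 + γ ∧ a.2.2 = β * a.1 + δ) ∧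
      (∀ b, lnM b P = 0 → b.2.1 = w * b.1 + β ∧ b.2.2 = γ * b.1 + δ) := by
  obtain ⟨e1, e2, w, h⟩ := classify_aux P hdeg hG hM v hv hvz
  set X0 : MvPolynomial (Fin 3) F := MvPolynomial.X 1 - MvPolynomial.C (v 1) with hX0
  set Y0 : MvPolynomial (Fin 3) F := MvPolynomial.X 2 - MvPolynomial.C (v 2) with hY0
  set φ : MvPolynomial (Fin 3) F := (MvPolynomial.C (v 0) + MvPolynomial.C e1 * X0) +
    (MvPolynomial.C e2 + MvPolynomial.C w * X0) * Y0 with hφ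
  set χ : Polynomial (Polynomial F) →+* MvPolynomial (Fin 3) F :=
    Polynomial.eval₂RingHom (Polynomial.aeval X0 : Polynomial F →ₐ[F] _).toRingHom Y0 with hχ
  have hc : ∀ R : MvPolynomial (Fin 3) F, χ (MvPolynomial.aeval ![Polynomial.C (Polynomial.C (v 0) + Polynomial.C e1 * Polynomial.X) +
      Polynomial.C (Polynomial.C e2 + Polynomial.C w * Polynomial.X) * Polynomial.X,
      Polynomial.C (Polynomial.C (v 1) + Polynomial.X),
      Polynomial.C (Polynomial.C (v 2)) + Polynomial.X] R) =
      MvPolynomial.aeval ![φ, MvPolynomial.X 1, MvPolynomial.X 2] R := by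
    intro R
    induction R using MvPolynomial.induction_on with
    | C x => simp [hχ, Polynomial.algebraMap_apply, MvPolynomial.algebraMap_eq]
    | add p q hp hq => simp only [map_add] at hp hq ⊢; rw [hp, hq]
    | mul_X p n hp =>
      rw [map_mul, map_mul, map_mul, hp]
      congr 1
      fin_cases n
      · simp [hχ, hφ, MvPolynomial.algebraMap_eq]
      · simp [hχ, hX0, MvPolynomial.algebraMap_eq]
      · simp [hχ, hY0, MvPolynomial.algebraMap_eq]
  have h1 := hc P
  rw [h, map_zero] at h1
  have h2 := dvd_sub_aeval φ P
  rw [← h1, sub_zero] at h2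
  have hφφ : MvPolynomial.aeval ![φ, MvPolynomial.X 1, MvPolynomial.X 2]
      (MvPolynomial.X 0 - φ) = 0 := by
    rw [map_sub, MvPolynomial.aeval_X]
    simp [hφ, hX0, hY0, MvPolynomial.algebraMap_eq]
  have hnu : ¬ IsUnit (MvPolynomial.X 0 - φ) := by
    intro hu
    have := hu.map (MvPolynomial.aeval ![φ, MvPolynomial.X 1, MvPolynomial.X 2] :
      MvPolynomial (Fin 3) F →ₐ[F] MvPolynomial (Fin 3) F)
    rw [hφφ] at this
    exact not_isUnit_zero this
  have h3 : P ∣ MvPolynomial.X 0 - φ := by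
    obtain ⟨r, hr⟩ := h2
    rcases hP.isUnit_or_isUnit hr with h | h
    · exact absurd h hnu
    · obtain ⟨u, rfl⟩ := h
      exact ⟨↑u⁻¹, by rw [hr]; simp [mul_assoc]⟩
  obtain ⟨r, hr⟩ := h3
  refine ⟨w, e1 - w * v 2, e2 - w * v 1, v 0 - e1 * v 1 - e2 * v 2 + w * v 1 * v 2, ?_, ?_⟩
  · intro a ha
    have h4 := congrArg (lnL a) hr
    rw [map_mul, ha, zero_mul] at h4
    have h5 : lnL a (MvPolynomial.X 0 - φ) =
      Polynomial.C (a.2.1 - (w * a.1 + (e2 - w * v 1))) * Polynomial.X +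
      Polynomial.C (a.2.2 - ((e1 - w * v 2) * a.1 + (v 0 - e1 * v 1 - e2 * v 2 + w * v 1 * v 2))) := by
      simp [hφ, hX0, hY0, lnL]
      ring
    rw [h5] at h4
    have c1 := congrArg (fun r => Polynomial.coeff r 1) h4
    have c0 := congrArg (fun r => Polynomial.coeff r 0) h4
    simp only [Polynomial.coeff_add, Polynomial.coeff_C_mul, Polynomial.coeff_X_one,
      Polynomial.coeff_X_zero, Polynomial.coeff_C_zero, Polynomial.coeff_zero,
      Polynomial.coeff_C_succ, mul_one, mul_zero, zero_add, add_zero] at c1 c0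
    exact ⟨sub_eq_zero.1 c1, sub_eq_zero.1 c0⟩
  · intro a ha
    have h4 := congrArg (lnM a) hr
    rw [map_mul, ha, zero_mul] at h4
    have h5 : lnM a (MvPolynomial.X 0 - φ) =
      Polynomial.C (a.2.1 - (w * a.1 + (e1 - w * v 2))) * Polynomial.X +
      Polynomial.C (a.2.2 - ((e2 - w * v 1) * a.1 + (v 0 - e1 * v 1 - e2 * v 2 + w * v 1 * v 2))) := by
      simp [hφ, hX0, hY0, lnM]
      ring
    rw [h5] at h4
    have c1 := congrArg (fun r => Polynomial.coeff r 1) h4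
    have c0 := congrArg (fun r => Polynomial.coeff r 0) h4
    simp only [Polynomial.coeff_add, Polynomial.coeff_C_mul, Polynomial.coeff_X_one,
      Polynomial.coeff_X_zero, Polynomial.coeff_C_zero, Polynomial.coeff_zero,
      Polynomial.coeff_C_succ, mul_one, mul_zero, zero_add, add_zero] at c1 c0
    exact ⟨sub_eq_zero.1 c1, sub_eq_zero.1 c0⟩

end


section
variable {F : Type*} [Field F]

theorem inc_symm {a b : F × F × F} : inc a b ↔ inc b a := by
  unfold inc
  constructor <;> intro h <;> linear_combination -h

open Classical in
/-- number of incidences -/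
noncomputable def nI (A B : Finset (F × F × F)) : ℕ :=
  ∑ a ∈ A, ∑ b ∈ B, if inc a b then 1 else 0

theorem nI_comm (A B : Finset (F × F × F)) : nI A B = nI B A := by
  unfold nI
  rw [Finset.sum_comm]
  refine Finset.sum_congr rfl fun a _ => Finset.sum_congr rfl fun b _ => ?_
  by_cases h : inc b a
  · rw [if_pos h, if_pos (inc_symm.1 h)]
  · rw [if_neg h, if_neg (fun h2 => h (inc_symm.1 h2))]

theorem nI_split_left (A B : Finset (F × F × F)) (p : F × F × F → Prop) [DecidablePred p] :
    nI A B = nI (A.filter p) B + nI (A.filter fun a => ¬ p a) B := by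
  unfold nI
  exact (Finset.sum_filter_add_sum_filter_not A p _).symm

theorem nI_split_right (A B : Finset (F × F × F)) (p : F × F × F → Prop) [DecidablePred p] :
    nI A B = nI A (B.filter p) + nI A (B.filter fun a => ¬ p a) := by
  rw [nI_comm, nI_split_left B A p, nI_comm, nI_comm _ A]

theorem nI_le_of_left (A B : Finset (F × F × F)) (k : ℕ)
    (h : ∀ a ∈ A, ∀ B' ⊆ B, (∀ b ∈ B', inc a b) → B'.card ≤ k) : nI A B ≤ k * A.card := by
  classical
  unfold nI
  rw [mul_comm]
  refine (Finset.sum_le_card_nsmul _ _ k ?_).trans (by simp)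
  intro a ha
  have := h a ha (B.filter fun b => inc a b) (Finset.filter_subset _ _) (by simp)
  rw [Finset.card_filter] at this
  convert this

theorem nI_le_of_right (A B : Finset (F × F × F)) (k : ℕ)
    (h : ∀ b ∈ B, ∀ A' ⊆ A, (∀ a ∈ A', inc a b) → A'.card ≤ k) : nI A B ≤ k * B.card := by
  rw [nI_comm]
  apply nI_le_of_left
  intro b hb A' hA' h'
  exact h b hb A' hA' fun a ha => inc_symm.1 (h' a ha)

theorem nI_le_mul (A B : Finset (F × F × F)) : nI A B ≤ A.card * B.card := by
  rw [mul_comm]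
  exact nI_le_of_left A B _ fun a _ B' hB' _ => Finset.card_le_card hB'

theorem cnt_M (Q : MvPolynomial (Fin 3) F) (b : F × F × F) (hb : lnM b Q ≠ 0)
    (A : Finset (F × F × F)) (hA : Set.InjOn (fun a : F × F × F => a.1) A)
    (h : ∀ a ∈ A, lnL a Q = 0) (hi : ∀ a ∈ A, inc a b) : A.card ≤ Q.totalDegree := by
  classical
  refine le_trans ?_ (natDegree_lnM_le b Q)
  rw [← Finset.card_image_of_injOn hA]
  apply Polynomial.card_le_degree_of_subset_roots
  intro x hx
  rw [Finset.mem_val] at hx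
  obtain ⟨a, ha, rfl⟩ := Finset.mem_image.1 hx
  rw [Polynomial.mem_roots hb, Polynomial.IsRoot, ← eval_inc (hi a ha), h a ha]
  simp

theorem cnt_L (Q : MvPolynomial (Fin 3) F) (a : F × F × F) (ha : lnL a Q ≠ 0)
    (B : Finset (F × F × F)) (hB : Set.InjOn (fun a : F × F × F => a.1) B)
    (h : ∀ b ∈ B, lnM b Q = 0) (hi : ∀ b ∈ B, inc a b) : B.card ≤ Q.totalDegree := by
  rw [← totalDegree_sw]
  apply cnt_M (sw Q) a (by rwa [← lnL_eq]) B hB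
  · intro b hb; rw [← lnM_eq]; exact h b hb
  · intro b hb; exact inc_symm.1 (hi b hb)

open Classical in
/-- regulus hypothesis -/
def Reg (k : ℕ) (A B : Finset (F × F × F)) : Prop :=
  ∀ w β γ δ : F, (A.filter fun a => a.2.1 = w * a.1 + γ ∧ a.2.2 = β * a.1 + δ).card ≤ k ∨
    (B.filter fun b => b.2.1 = w * b.1 + β ∧ b.2.2 = γ * b.1 + δ).card ≤ k

theorem Reg.symm {k : ℕ} {A B : Finset (F × F × F)} (h : Reg k A B) : Reg k B A :=
  fun w β γ δ => (h w γ β δ).symm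

theorem Reg.mono {k : ℕ} {A B A' B' : Finset (F × F × F)} (h : Reg k A B) (hA : A' ⊆ A)
    (hB : B' ⊆ B) : Reg k A' B' := by
  classical
  intro w β γ δ
  refine (h w β γ δ).imp ?_ ?_ <;> intro h'
  · refine le_trans ?_ h'
    convert Finset.card_le_card (Finset.filter_subset_filter _ hA)
  · refine le_trans ?_ h'
    convert Finset.card_le_card (Finset.filter_subset_filter _ hB)

/-- main bound at level `n` for all subfamilies -/
def TT (K k n : ℕ) (A B : Finset (F × F × F)) : Prop :=
  ∀ A' ⊆ A, ∀ B' ⊆ B, A'.card ≤ n ^ 2 → B'.card ≤ n ^ 2 → nI A' B' ≤ K * (n ^ 3 + k * n ^ 2)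

theorem TT.symm {K k n : ℕ} {A B : Finset (F × F × F)} (h : TT K k n A B) : TT K k n B A := by
  intro A' hA' B' hB' h1 h2
  rw [nI_comm]; exact h B' hB' A' hA' h2 h1

theorem TT.mono {K k n : ℕ} {A B A' B' : Finset (F × F × F)} (h : TT K k n A B) (hA : A' ⊆ A)
    (hB : B' ⊆ B) : TT K k n A' B' :=
  fun A'' hA'' B'' hB'' => h A'' (hA''.trans hA) B'' (hB''.trans hB)

theorem comp_b (P Q : MvPolynomial (Fin 3) F) (hP : Irreducible P)
    (hZ : MvPolynomial.degreeOf 0 P ≠ 0) (hPQ : ¬ P ∣ Q) (hQ : Q.totalDegree ≤ 3 * P.totalDegree)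
    (A B : Finset (F × F × F))
    (hA : Set.InjOn (fun a : F × F × F => a.1) A) (hB : Set.InjOn (fun a : F × F × F => a.1) B)
    (h1 : ∀ a ∈ A, lnL a P = 0) (h2 : ∀ b ∈ B, lnM b P = 0) (h3 : ∀ a ∈ A, lnL a Q = 0)
    (K k : ℕ) (hT : TT K k (3 * P.totalDegree) A B) :
    nI A B ≤ 3 * P.totalDegree * B.card +
      K * ((3 * P.totalDegree) ^ 3 + k * (3 * P.totalDegree) ^ 2) := by
  classical
  rw [nI_split_right A B (fun b => lnM b Q = 0), add_comm]
  have hAc := bezout_L P Q hP hZ hPQ A hA h1 h3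
  have hBc := bezout_M P Q hP hZ hPQ (B.filter fun b => lnM b Q = 0)
    (hB.mono (by exact_mod_cast Finset.filter_subset _ _)) (fun b hb => h2 b (Finset.mem_filter.1 hb).1)
    (fun b hb => (Finset.mem_filter.1 hb).2)
  apply add_le_add
  · refine (nI_le_of_right _ _ (3 * P.totalDegree) ?_).trans (by
      gcongr; exact Finset.filter_subset _ _)
    intro b hb A' hA' hi
    exact (cnt_M Q b (Finset.mem_filter.1 hb).2 A' (hA.mono (by exact_mod_cast hA'))
      (fun a ha => h3 a (hA' ha)) hi).trans hQ
  · apply hT A subset_rfl _ (Finset.filter_subset _ _) <;> nlinarith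

theorem comp_b' (P Q : MvPolynomial (Fin 3) F) (hP : Irreducible P)
    (hZ : MvPolynomial.degreeOf 0 P ≠ 0) (hPQ : ¬ P ∣ Q) (hQ : Q.totalDegree ≤ 3 * P.totalDegree)
    (A B : Finset (F × F × F))
    (hA : Set.InjOn (fun a : F × F × F => a.1) A) (hB : Set.InjOn (fun a : F × F × F => a.1) B)
    (h1 : ∀ a ∈ A, lnL a P = 0) (h2 : ∀ b ∈ B, lnM b P = 0) (h3 : ∀ b ∈ B, lnM b Q = 0)
    (K k : ℕ) (hT : TT K k (3 * P.totalDegree) A B) :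
    nI A B ≤ 3 * P.totalDegree * A.card +
      K * ((3 * P.totalDegree) ^ 3 + k * (3 * P.totalDegree) ^ 2) := by
  rw [nI_comm, ← totalDegree_sw P]
  apply comp_b (sw P) (sw Q) ((MulEquiv.irreducible_iff sw).2 hP) (by rwa [degreeOf_zero_sw])
    (by rwa [map_dvd_iff]) (by rwa [totalDegree_sw, totalDegree_sw]) B A hB hA
  · intro b hb; rw [← lnM_eq]; exact h2 b hb
  · intro b hb; rw [← lnL_eq]; exact h1 b hb
  · intro b hb; rw [← lnM_eq]; exact h3 b hb
  · rw [totalDegree_sw]; exact hT.symm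

theorem dvd_sub_aeval1 (α : F) (P : MvPolynomial (Fin 3) F) :
    (MvPolynomial.X 1 - MvPolynomial.C α) ∣
      P - MvPolynomial.aeval ![MvPolynomial.X 0, MvPolynomial.C α, MvPolynomial.X 2] P := by
  induction P using MvPolynomial.induction_on with
  | C x => simp
  | add p q hp hq =>
    rw [map_add, add_sub_add_comm]
    exact dvd_add hp hq
  | mul_X p n hp =>
    rw [map_mul, MvPolynomial.aeval_X]
    have e : (MvPolynomial.X 1 - MvPolynomial.C α) ∣ MvPolynomial.X n -
        ![MvPolynomial.X 0, MvPolynomial.C α, MvPolynomial.X 2] n := by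
      fin_cases n <;> simp
    exact dvd_mul_sub_mul hp e

theorem no_Z (P : MvPolynomial (Fin 3) F) (hP : Irreducible P)
    (hZ : MvPolynomial.degreeOf 0 P = 0) (a b : F × F × F) (ha : lnL a P = 0) (hb : lnM b P = 0) :
    False := by
  have h0 : (0 : Fin 3) ∉ P.vars := by
    intro h
    exact MvPolynomial.mem_vars_iff_degreeOf_ne_zero.1 h hZ
  set χ : Polynomial F →ₐ[F] MvPolynomial (Fin 3) F := Polynomial.aeval (MvPolynomial.X 2) with hχ
  have h1 : MvPolynomial.aeval ![MvPolynomial.X 0, MvPolynomial.C a.1, MvPolynomial.X 2] P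
      = χ (lnL a P) := by
    refine MvPolynomial.hom_congr_vars
      (f₁ := (MvPolynomial.aeval ![MvPolynomial.X 0, MvPolynomial.C a.1, MvPolynomial.X 2] :
        MvPolynomial (Fin 3) F →ₐ[F] _).toRingHom)
      (f₂ := (χ.comp (lnL a)).toRingHom) ?_ ?_ rfl
    · ext x; simp [lnL, hχ]
    · intro i hi _
      fin_cases i
      · exact absurd hi h0
      · simp [lnL, hχ, MvPolynomial.algebraMap_eq]
      · simp [lnL, hχ]
  have h2 := dvd_sub_aeval1 a.1 P
  rw [h1, ha, map_zero, sub_zero] at h2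
  obtain ⟨r, hr⟩ := h2
  rcases hP.isUnit_or_isUnit hr with h | h
  · have := h.map (MvPolynomial.eval ![0, a.1, 0])
    simp at this
  · have h3 := congrArg (lnM b) hr
    rw [hb, map_mul] at h3
    have h4 := (h.map (lnM b)).ne_zero
    have h5 : lnM b (MvPolynomial.X 1 - MvPolynomial.C a.1) = 0 := by
      rcases mul_eq_zero.1 h3.symm with h | h
      · exact h
      · exact absurd h h4
    have h6 : lnM b (MvPolynomial.X 1 - MvPolynomial.C a.1) = Polynomial.X - Polynomial.C a.1 := by
      simp [lnM]
    rw [h6] at h5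
    exact Polynomial.X_sub_C_ne_zero _ h5

theorem pderiv0_ne (P : MvPolynomial (Fin 3) F) (hZ : MvPolynomial.degreeOf 0 P ≠ 0)
    (hdeg : ∀ k : ℕ, 0 < k → k ≤ P.totalDegree → (k : F) ≠ 0) :
    MvPolynomial.pderiv 0 P ≠ 0 := by
  intro h
  apply hZ
  rw [MvPolynomial.degreeOf_eq_sup, ← Nat.bot_eq_zero, Finset.sup_eq_bot_iff]
  intro d hd
  by_contra h0
  have h1 := congrArg (MvPolynomial.coeff (d - Finsupp.single 0 1)) h
  have h0' : 1 ≤ d 0 := Nat.one_le_iff_ne_zero.2 h0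
  have h2 : d - Finsupp.single 0 1 + Finsupp.single 0 1 = d :=
    tsub_add_cancel_of_le (Finsupp.single_le_iff.2 h0')
  rw [MvPolynomial.coeff_pderiv, h2, MvPolynomial.coeff_zero] at h1
  rcases mul_eq_zero.1 h1 with h | h
  · exact (MvPolynomial.mem_support_iff.1 hd) h
  · apply hdeg (d 0) h0'
    · exact (MvPolynomial.le_degreeOf_of_mem_support 0 hd).trans
        (MvPolynomial.degreeOf_le_totalDegree _ _)
    · rw [← h]
      simp only [Finsupp.coe_tsub, Pi.sub_apply, Finsupp.single_eq_same]
      rw [← Nat.cast_add_one, Nat.sub_add_cancel h0']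

theorem component [Infinite F] (P : MvPolynomial (Fin 3) F) (hP : Irreducible P)
    (hdeg : ∀ k : ℕ, 0 < k → k ≤ P.totalDegree → (k : F) ≠ 0)
    (A B : Finset (F × F × F))
    (hA : Set.InjOn (fun a : F × F × F => a.1) A) (hB : Set.InjOn (fun a : F × F × F => a.1) B)
    (h1 : ∀ a ∈ A, lnL a P = 0) (h2 : ∀ b ∈ B, lnM b P = 0)
    (K k : ℕ) (hT : TT K k (3 * P.totalDegree) A B) (hR : Reg k A B) :
    nI A B ≤ (3 * P.totalDegree + k) * (A.card + B.card) +
      K * ((3 * P.totalDegree) ^ 3 + k * (3 * P.totalDegree) ^ 2) := by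
  classical
  rcases A.eq_empty_or_nonempty with rfl | ⟨a0, ha0⟩
  · simp [nI]
  rcases B.eq_empty_or_nonempty with rfl | ⟨b0, hb0⟩
  · simp [nI]
  by_cases hZ : MvPolynomial.degreeOf 0 P = 0
  · exact (no_Z P hP hZ a0 b0 (h1 a0 ha0) (h2 b0 hb0)).elim
  have aux1 : ∀ Q : MvPolynomial (Fin 3) F, ¬ P ∣ Q → Q.totalDegree ≤ 3 * P.totalDegree →
      (∀ a ∈ A, lnL a Q = 0) → nI A B ≤ (3 * P.totalDegree + k) * (A.card + B.card) +
      K * ((3 * P.totalDegree) ^ 3 + k * (3 * P.totalDegree) ^ 2) := by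
    intro Q q1 q2 q3
    refine (comp_b P Q hP hZ q1 q2 A B hA hB h1 h2 q3 K k hT).trans ?_
    gcongr <;> omega
  have aux2 : ∀ Q : MvPolynomial (Fin 3) F, ¬ P ∣ Q → Q.totalDegree ≤ 3 * P.totalDegree →
      (∀ a ∈ B, lnM a Q = 0) → nI A B ≤ (3 * P.totalDegree + k) * (A.card + B.card) +
      K * ((3 * P.totalDegree) ^ 3 + k * (3 * P.totalDegree) ^ 2) := by
    intro Q q1 q2 q3
    refine (comp_b' P Q hP hZ q1 q2 A B hA hB h1 h2 q3 K k hT).trans ?_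
    gcongr <;> omega
  by_cases hG : P ∣ GG P
  swap
  · exact aux1 _ hG (totalDegree_GG_le P) fun a ha => GG_vanish a P (h1 a ha)
  by_cases hM : P ∣ GM P
  swap
  · exact aux2 _ hM (totalDegree_GM_le P) fun a ha => GM_vanish a P (h2 a ha)
  have hne := pderiv0_ne P hZ hdeg
  have hnd : ¬ P ∣ MvPolynomial.pderiv 0 P := by
    intro h
    have e1 := MvPolynomial.totalDegree_le_of_dvd_of_isDomain h hne
    have e2 := totalDegree_pderiv_le 0 P
    have e3 := MvPolynomial.degreeOf_le_totalDegree P 0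
    omega
  by_cases hPZ : ∀ a ∈ A, lnL a (MvPolynomial.pderiv 0 P) = 0
  · exact aux1 _ hnd (by have := totalDegree_pderiv_le 0 P; omega) hPZ
  push Not at hPZ
  obtain ⟨a, ha, hne'⟩ := hPZ
  obtain ⟨t, ht⟩ : ∃ t, (lnL a (MvPolynomial.pderiv 0 P)).eval t ≠ 0 := by
    by_contra! hcon
    exact hne' (Polynomial.funext (by simpa using hcon))
  rw [eval_lnL] at ht
  have hv := eval_lnL a P t
  rw [h1 a ha, Polynomial.eval_zero] at hv
  obtain ⟨w, β, γ, δ, g1, g2⟩ := classify P hP hdeg hG hM _ hv.symm ht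
  have hAf : (A.filter fun a => a.2.1 = w * a.1 + γ ∧ a.2.2 = β * a.1 + δ) = A :=
    Finset.filter_true_of_mem fun a ha => g1 a (h1 a ha)
  have hBf : (B.filter fun b => b.2.1 = w * b.1 + β ∧ b.2.2 = γ * b.1 + δ) = B :=
    Finset.filter_true_of_mem fun a ha => g2 a (h2 a ha)
  have := hR w β γ δ
  have e1 : (A.filter fun a => a.2.1 = w * a.1 + γ ∧ a.2.2 = β * a.1 + δ).card = A.card := by rw [hAf]
  have e2 : (B.filter fun b => b.2.1 = w * b.1 + β ∧ b.2.2 = γ * b.1 + δ).card = B.card := by rw [hBf]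
  have h3 : A.card * B.card ≤ k * (A.card + B.card) := by
    rcases this with h | h
    · have : A.card ≤ k := by convert h using 1; convert e1.symm
      nlinarith
    · have : B.card ≤ k := by convert h using 1; convert e2.symm
      nlinarith
  refine (nI_le_mul A B).trans (h3.trans ?_)
  nlinarith [Nat.zero_le (3 * P.totalDegree * (A.card + B.card)), Nat.zero_le (K * ((3 * P.totalDegree) ^ 3 + k * (3 * P.totalDegree) ^ 2))]

theorem claim [Infinite F] (D K k : ℕ) (hdeg : ∀ k : ℕ, 0 < k → k ≤ D → (k : F) ≠ 0)
    (P : MvPolynomial (Fin 3) F) : P ≠ 0 → P.totalDegree ≤ D → ∀ 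
    (A B : Finset (F × F × F)),
    Set.InjOn (fun a : F × F × F => a.1) A → Set.InjOn (fun a : F × F × F => a.1) B →
    (∀ a ∈ A, lnL a P = 0) → (∀ b ∈ B, lnM b P = 0) →
    (∀ n ≤ 3 * D, TT K k n A B) → (Reg k A B) →
    nI A B ≤ (3 * P.totalDegree + k) * (A.card + B.card) +
      K * ((3 * P.totalDegree) ^ 3 + k * (3 * P.totalDegree) ^ 2) := by
  classical
  induction P using WfDvdMonoid.induction_on_irreducible with
  | zero => intro h; exact absurd rfl h
  | unit u hu =>
    intro _ _ A B _ _ h1 h2 _ _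
    have : A = ∅ := by
      rw [Finset.eq_empty_iff_forall_notMem]
      intro a ha
      exact (hu.map (lnL a)).ne_zero (h1 a ha)
    subst this
    simp [nI]
  | mul Q π hQ hπ ih =>
    intro _ hD A B hA hB h1 h2 hT hR
    have htd : (π * Q).totalDegree = π.totalDegree + Q.totalDegree :=
      MvPolynomial.totalDegree_mul_of_isDomain hπ.ne_zero hQ
    rw [htd] at hD ⊢
    rw [nI_split_left A B (fun a => lnL a π = 0),
      nI_split_right (A.filter _) B (fun b => lnM b π = 0),
      nI_split_right (A.filter fun a => ¬ lnL a π = 0) B (fun b => lnM b π = 0)]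
    set A1 := A.filter fun a => lnL a π = 0 with hA1
    set A2 := A.filter fun a => ¬ lnL a π = 0 with hA2
    set B1 := B.filter fun a => lnM a π = 0 with hB1
    set B2 := B.filter fun a => ¬ lnM a π = 0 with hB2
    have sA1 : A1 ⊆ A := Finset.filter_subset _ _
    have sA2 : A2 ⊆ A := Finset.filter_subset _ _
    have sB1 : B1 ⊆ B := Finset.filter_subset _ _
    have sB2 : B2 ⊆ B := Finset.filter_subset _ _
    have cA : A1.card + A2.card = A.card := Finset.card_filter_add_card_filter_not _
    have cB : B1.card + B2.card = B.card := Finset.card_filter_add_card_filter_not _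
    have i11 := component π hπ (fun k h1 h2 => hdeg k h1 (by omega)) A1 B1
      (hA.mono (by exact_mod_cast sA1)) (hB.mono (by exact_mod_cast sB1))
      (fun a ha => (Finset.mem_filter.1 ha).2) (fun a ha => (Finset.mem_filter.1 ha).2) K k
      ((hT _ (by omega)).mono sA1 sB1) (hR.mono sA1 sB1)
    have i22 := ih hQ (by omega) A2 B2
      (hA.mono (by exact_mod_cast sA2)) (hB.mono (by exact_mod_cast sB2))
      (fun a ha => by
        have h := h1 a (sA2 ha)
        rw [map_mul] at h
        exact (mul_eq_zero.1 h).resolve_left (Finset.mem_filter.1 ha).2)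
      (fun a ha => by
        have h := h2 a (sB2 ha)
        rw [map_mul] at h
        exact (mul_eq_zero.1 h).resolve_left (Finset.mem_filter.1 ha).2)
      (fun n hn => (hT n hn).mono sA2 sB2) (hR.mono sA2 sB2)
    have i12 : nI A1 B2 ≤ π.totalDegree * B2.card := by
      apply nI_le_of_right
      intro b hb A' hA' hi
      exact cnt_M π b (Finset.mem_filter.1 hb).2 A'
        (hA.mono (by exact_mod_cast hA'.trans sA1))
        (fun a ha => (Finset.mem_filter.1 (hA' ha)).2) hi
    have i21 : nI A2 B1 ≤ π.totalDegree * A2.card := by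
      apply nI_le_of_left
      intro b hb A' hA' hi
      exact cnt_L π b (Finset.mem_filter.1 hb).2 A'
        (hB.mono (by exact_mod_cast hA'.trans sB1))
        (fun a ha => (Finset.mem_filter.1 (hA' ha)).2) hi
    rw [← cA, ← cB]
    set x := π.totalDegree
    set y := Q.totalDegree
    have f1 : K * ((3 * x) ^ 3 + k * (3 * x) ^ 2) + K * ((3 * y) ^ 3 + k * (3 * y) ^ 2) ≤
        K * ((3 * (x + y)) ^ 3 + k * (3 * (x + y)) ^ 2) := by
      rw [← mul_add]
      refine Nat.mul_le_mul_left K ?_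
      have e1 : (3 * (x + y)) ^ 3 = (3 * x) ^ 3 + (3 * y) ^ 3 + 81 * (x^2*y+x*y^2) := by ring
      have e2 : k * (3 * (x + y)) ^ 2 = k * (3 * x) ^ 2 + k * (3 * y) ^ 2 + 18 * (k * x * y) := by ring
      rw [e1, e2]
      omega
    have f2 : (3 * x + k) * (A1.card + B1.card) + (3 * y + k) * (A2.card + B2.card)
        + x * B2.card + x * A2.card ≤
        (3 * (x + y) + k) * (A1.card + A2.card + (B1.card + B2.card)) := by
      nlinarith [Nat.zero_le (y * A1.card), Nat.zero_le (y * B1.card), Nat.zero_le (x * A2.card),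
        Nat.zero_le (x * B2.card)]
    linarith
end


section
variable {F : Type*} [Field F]

/-- exponent vectors -/
noncomputable def mon3 (m : ℕ) (e : Fin m × Fin m × Fin m) : Fin 3 →₀ ℕ :=
  Finsupp.equivFunOnFinite.symm ![(e.1 : ℕ), (e.2.1 : ℕ), (e.2.2 : ℕ)]

theorem mon3_inj (m : ℕ) : Function.Injective (mon3 m) := by
  intro e f h
  have h' := Finsupp.equivFunOnFinite.symm.injective h
  have h0 := congrFun h' 0
  have h1 := congrFun h' 1
  have h2 := congrFun h' 2
  simp at h0 h1 h2
  ext <;> assumption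

theorem interp [Infinite F] (S : Finset (F × F × F)) (m : ℕ) (h : S.card * (3 * m) < m ^ 3) :
    ∃ P : MvPolynomial (Fin 3) F, P ≠ 0 ∧ P.totalDegree < 3 * m ∧ ∀ a ∈ S, lnL a P = 0 := by
  classical
  have hm : 0 < m := by
    rcases Nat.eq_zero_or_pos m with rfl | h'
    · simp at h
    · exact h'
  set t : ℕ ↪ F := Infinite.natEmbedding F
  let mk : (Fin m × Fin m × Fin m → F) →ₗ[F] MvPolynomial (Fin 3) F :=
    ∑ e, (MvPolynomial.monomial (mon3 m e)).comp (LinearMap.proj e)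
  have hmk : ∀ c, mk c = ∑ e, MvPolynomial.monomial (mon3 m e) (c e) := by
    intro c; simp [mk]
  let ev : (Fin m × Fin m × Fin m → F) →ₗ[F] (S × Fin (3 * m) → F) :=
    LinearMap.pi fun x => ((MvPolynomial.aeval
      ![x.1.1.2.1 * t x.2 + x.1.1.2.2, x.1.1.1, t x.2] :
        MvPolynomial (Fin 3) F →ₐ[F] F).toLinearMap).comp mk
  have hk : LinearMap.ker ev ≠ ⊥ := by
    apply LinearMap.ker_ne_bot_of_finrank_lt
    simp only [Module.finrank_fintype_fun_eq_card, Fintype.card_prod, Fintype.card_fin,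
      Fintype.card_coe]
    calc _ < m ^ 3 := h
      _ = _ := by ring
  obtain ⟨c, hc, hc0⟩ := Submodule.exists_mem_ne_zero_of_ne_bot hk
  refine ⟨mk c, ?_, ?_, ?_⟩
  · intro h0
    apply hc0
    funext e
    have h1 := congrArg (MvPolynomial.coeff (mon3 m e)) h0
    rw [hmk, MvPolynomial.coeff_sum, MvPolynomial.coeff_zero] at h1
    rw [Finset.sum_eq_single e] at h1
    · simpa using h1
    · intro f _ hf
      rw [MvPolynomial.coeff_monomial, if_neg]
      intro h; exact hf (mon3_inj m h)
    · simp
  · rw [hmk]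
    refine lt_of_le_of_lt (MvPolynomial.totalDegree_finsetSum_le (d := 3 * (m - 1)) ?_) (by omega)
    intro e _
    refine (MvPolynomial.totalDegree_monomial_le _ _).trans ?_
    have : (mon3 m e).degree = e.1 + e.2.1 + e.2.2 := by
      simp [Finsupp.degree_eq_sum, mon3, Fin.sum_univ_three]
    have h1 := e.1.2
    have h2 := e.2.1.2
    have h3 := e.2.2.2
    first
      | (rw [this]; omega)
      | (rw [Finsupp.sum_fintype _ _ (by simp)]
         simp [mon3, Fin.sum_univ_three]; omega)
  · intro a ha
    have hdeg : (mk c).totalDegree < 3 * m := by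
      rw [hmk]
      refine lt_of_le_of_lt (MvPolynomial.totalDegree_finsetSum_le (d := 3 * (m - 1)) ?_) (by omega)
      intro e _
      refine (MvPolynomial.totalDegree_monomial_le _ _).trans ?_
      have : (mon3 m e).degree = e.1 + e.2.1 + e.2.2 := by
        simp [Finsupp.degree_eq_sum, mon3, Fin.sum_univ_three]
      have h1 := e.1.2
      have h2 := e.2.1.2
      have h3 := e.2.2.2
      first
        | (rw [this]; omega)
        | (rw [Finsupp.sum_fintype _ _ (by simp)]
           simp [mon3, Fin.sum_univ_three]; omega)
    apply Polynomial.eq_zero_of_natDegree_lt_card_of_eval_eq_zero (lnL a (mk c))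
      (f := fun i : Fin (3 * m) => t i)
    · intro i j hij
      exact Fin.ext (t.injective hij)
    · intro i
      rw [eval_lnL]
      have := congrFun (LinearMap.mem_ker.1 hc) (⟨a, ha⟩, i)
      simpa [ev, MvPolynomial.aeval_eq_eval] using this
    · rw [Fintype.card_fin]
      exact (natDegree_lnL_le a _).trans_lt hdeg

open Classical in
theorem select (A B : Finset (F × F × F)) (T lam : ℕ) : ∃ S ⊆ A, lam * S.card ≤ T * B.card ∧
    ∀ a ∈ A, a ∉ S → (B.filter fun b => inc a b ∧ (S.filter fun a => inc a b).card < T).card ≤ lam := by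
  obtain ⟨Φ, hΦ⟩ : ∃ Φ : Finset (F × F × F) → ℕ, ∀ S, Φ S = ∑ b ∈ B, min T (S.filter fun a => inc a b).card :=
    ⟨_, fun _ => rfl⟩
  obtain ⟨S, hS, hmax⟩ := Finset.exists_max_image A.powerset
    (fun S => (Φ S : ℤ) - lam * S.card) ⟨∅, Finset.empty_mem_powerset _⟩
  refine ⟨S, Finset.mem_powerset.1 hS, ?_, ?_⟩
  · have h0 := hmax ∅ (Finset.empty_mem_powerset _)
    have h1 : Φ S ≤ T * B.card := by
      rw [mul_comm, hΦ]
      exact (Finset.sum_le_card_nsmul _ _ T (fun b _ => min_le_left _ _)).trans (by rw [smul_eq_mul])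
    simp only [Finset.card_empty, Nat.cast_zero, mul_zero, sub_zero] at h0
    have h2 : (0:ℤ) ≤ Φ ∅ := by positivity
    have : ((lam * S.card : ℕ) : ℤ) ≤ Φ S := by push_cast; linarith
    have : lam * S.card ≤ Φ S := by exact_mod_cast this
    omega
  · intro a ha haS
    have h0 := hmax (insert a S) (by
      rw [Finset.mem_powerset] at hS ⊢
      exact Finset.insert_subset ha hS)
    rw [Finset.card_insert_of_notMem haS] at h0
    have h1 : Φ (insert a S) = Φ S +
        (B.filter fun b => inc a b ∧ (S.filter fun a => inc a b).card < T).card := by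
      rw [hΦ, hΦ]
      rw [Finset.card_filter, ← Finset.sum_add_distrib]
      refine Finset.sum_congr rfl fun b _ => ?_
      by_cases hab : inc a b
      · rw [Finset.filter_insert, if_pos hab, Finset.card_insert_of_notMem
          (fun h => haS (Finset.mem_filter.1 h).1)]
        by_cases hT : (S.filter fun a => inc a b).card < T
        · rw [if_pos ⟨hab, hT⟩]; omega
        · rw [if_neg (fun h => hT h.2)]; omega
      · rw [Finset.filter_insert, if_neg hab, if_neg (fun h => hab h.1), add_zero]
    rw [h1] at h0
    push_cast at h0
    have : ((B.filter fun b => inc a b ∧ (S.filter fun a => inc a b).card < T).card : ℤ) ≤ lam := by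
      linarith
    exact_mod_cast this

theorem main_inc [Infinite F] (k : ℕ) (n : ℕ) : (∀ j : ℕ, 0 < j → j < n → (j : F) ≠ 0) →
    ∀ A B : Finset (F × F × F), Set.InjOn (fun a : F × F × F => a.1) A →
    Set.InjOn (fun a : F × F × F => a.1) B → Reg k A B → A.card ≤ n ^ 2 → B.card ≤ n ^ 2 →
    nI A B ≤ 1000 * (n ^ 3 + k * n ^ 2) := by
  classical
  induction n using Nat.strong_induction_on with
  | _ n ih =>
  intro hchar A B hA hB hR cA cB
  by_cases hn : n < 36
  · refine (nI_le_mul A B).trans ((Nat.mul_le_mul cA cB).trans ?_)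
    have : n ^ 2 * n ^ 2 = n * n ^ 3 := by ring
    rw [this]
    nlinarith [Nat.zero_le (n ^ 3), Nat.zero_le (k * n ^ 2), Nat.mul_le_mul_right (n^3) hn.le]
  push Not at hn
  obtain ⟨m, hm⟩ : ∃ m, m = n / 36 := ⟨_, rfl⟩
  have hm1 : 36 * m ≤ n := by omega
  have hm2 : n < 72 * m := by omega
  obtain ⟨S, hSA, hS1, hS2⟩ := select A B (3 * m) (648 * n + 1)
  have hS3 : S.card * (3 * m) < m ^ 3 := by
    have : 3 * S.card < m ^ 2 := by
      by_contra! hcon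
      have e1 : (648 * n + 1) * m ^ 2 ≤ (648 * n + 1) * (3 * S.card) := Nat.mul_le_mul_left _ hcon
      have e2 : 3 * m * B.card ≤ 3 * m * n ^ 2 := Nat.mul_le_mul_left _ cB
      have e3 : m * n * n ≤ m * n * (72 * m) := Nat.mul_le_mul_left _ hm2.le
      have e4 : 0 < m ^ 2 := by apply pow_pos; omega
      nlinarith
    have h0 : 0 < m := by omega
    calc S.card * (3 * m) = 3 * S.card * m := by ring
      _ < m ^ 2 * m := Nat.mul_lt_mul_of_pos_right this h0
      _ = _ := by ring
  obtain ⟨P, hP0, hPd, hPS⟩ := interp S m hS3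
  -- splitting
  rw [nI_split_right A B (fun b => (S.filter fun a => inc a b).card < 3 * m)]
  set Bu := B.filter (fun b => (S.filter fun a => inc a b).card < 3 * m) with hBu
  set Bs := B.filter (fun b => ¬ (S.filter fun a => inc a b).card < 3 * m) with hBs
  have cBu : Bu.card ≤ n ^ 2 := (Finset.card_le_card (Finset.filter_subset _ _)).trans cB
  have cBs : Bs.card ≤ n ^ 2 := (Finset.card_le_card (Finset.filter_subset _ _)).trans cB
  have sBs : Bs ⊆ B := Finset.filter_subset _ _
  have j1 : nI A Bu ≤ 3 * m * n ^ 2 + (648 * n + 1) * n ^ 2 := by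
    rw [nI_split_left A Bu (fun a => a ∈ S)]
    apply add_le_add
    · refine (nI_le_of_right _ _ (3 * m) ?_).trans (Nat.mul_le_mul_left _ cBu)
      intro b hb A' hA' hi
      refine le_trans (Finset.card_le_card ?_) (Finset.mem_filter.1 hb).2.le
      intro a ha
      exact Finset.mem_filter.2 ⟨(Finset.mem_filter.1 (hA' ha)).2, hi a ha⟩
    · refine (nI_le_of_left _ _ (648 * n + 1) ?_).trans (Nat.mul_le_mul_left _
        ((Finset.card_le_card (Finset.filter_subset _ _)).trans cA))
      intro a ha B' hB' hi
      rw [Finset.mem_filter] at ha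
      refine le_trans (Finset.card_le_card ?_) (hS2 a ha.1 ha.2)
      intro b hb
      have := Finset.mem_filter.1 (hB' hb)
      exact Finset.mem_filter.2 ⟨this.1, hi b hb, this.2⟩
  have hBsP : ∀ b ∈ Bs, lnM b P = 0 := by
    intro b hb
    by_contra hne
    have h1 := (Finset.mem_filter.1 hb).2
    have h2 := cnt_M P b hne (S.filter fun a => inc a b)
      (hA.mono (by
        have := (Finset.filter_subset (fun a => inc a b) S).trans hSA
        exact_mod_cast this))
      (fun a ha => hPS a (Finset.mem_filter.1 ha).1) (fun a ha => (Finset.mem_filter.1 ha).2)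
    omega
  have j2 : nI A Bs ≤ 3 * m * n ^ 2 + ((3 * P.totalDegree + k) * (n ^ 2 + n ^ 2) +
      1000 * ((3 * P.totalDegree) ^ 3 + k * (3 * P.totalDegree) ^ 2)) := by
    rw [nI_split_left A Bs (fun a => ¬ lnL a P = 0)]
    have sA : A.filter (fun a => ¬ ¬ lnL a P = 0) ⊆ A := Finset.filter_subset _ _
    apply add_le_add
    · refine (nI_le_of_left _ _ (3 * m) ?_).trans (Nat.mul_le_mul_left _
        ((Finset.card_le_card (Finset.filter_subset _ _)).trans cA))
      intro a ha B' hB' hi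
      have := cnt_L P a (Finset.mem_filter.1 ha).2 B' (hB.mono (by
        have := hB'.trans sBs
        exact_mod_cast this)) (fun b hb => hBsP b (hB' hb)) hi
      omega
    · refine (claim P.totalDegree 1000 k (fun j h1 h2 => hchar j h1 (by omega)) P hP0 le_rfl
        (A.filter fun a => ¬ ¬ lnL a P = 0) Bs (hA.mono (by exact_mod_cast sA))
        (hB.mono (by exact_mod_cast sBs)) (fun a ha => not_not.1 (Finset.mem_filter.1 ha).2)
        hBsP ?_ (hR.mono sA sBs)).trans ?_
      · intro n' hn' A' hA' B' hB' c1 c2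
        exact ih n' (by omega) (fun j h1 h2 => hchar j h1 (by omega)) A' B'
          (hA.mono (by exact_mod_cast hA'.trans sA)) (hB.mono (by exact_mod_cast hB'.trans sBs))
          (hR.mono (hA'.trans sA) (hB'.trans sBs)) c1 c2
      · have := (Finset.card_le_card sA).trans cA
        gcongr
  have hd : 4 * (3 * P.totalDegree) ≤ n := by omega
  set d := 3 * P.totalDegree
  have q1 : 36 * m * n ^ 2 ≤ n * n ^ 2 := Nat.mul_le_mul_right _ hm1
  have q2 : 4 * d * n ^ 2 ≤ n * n ^ 2 := Nat.mul_le_mul_right _ hd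
  have q3 : (4 * d) ^ 3 ≤ n ^ 3 := Nat.pow_le_pow_left hd 3
  have q4 : k * (4 * d) ^ 2 ≤ k * n ^ 2 := Nat.mul_le_mul_left _ (Nat.pow_le_pow_left hd 2)
  have q5 : 36 * n ^ 2 ≤ n * n ^ 2 := Nat.mul_le_mul_right _ hn
  have q6 : 0 ≤ k * n ^ 2 := Nat.zero_le _
  ring_nf at *
  linarith
end


section
variable {k F : Type*} [Field k] [Field F] [Algebra k F]

/-- independence of `1, θ, θ²` -/
def Ind (k : Type*) {F : Type*} [Field k] [Field F] [Algebra k F] (θ : F) : Prop :=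
  ∀ c s t r : k, algebraMap k F c + θ * algebraMap k F s + θ ^ 2 * algebraMap k F t
      + θ ^ 4 * algebraMap k F r = 0 →
    c = 0 ∧ s = 0 ∧ t = 0

/-- the embedding of configurations -/
noncomputable def emb (θ : F) (a : k × k × k) : F × F × F :=
  ((algebraMap k F a.1 + θ * algebraMap k F a.2.1 + θ ^ 2 * algebraMap k F a.2.2) /
      (1 + θ ^ 2 * algebraMap k F a.2.1),
    algebraMap k F a.2.1 / (1 + θ ^ 2 * algebraMap k F a.2.1),
    algebraMap k F a.2.2 / (1 + θ ^ 2 * algebraMap k F a.2.1))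

theorem Ind.den {θ : F} (h : Ind k θ) (s : k) : 1 + θ ^ 2 * algebraMap k F s ≠ 0 := by
  intro h0
  have := h 1 0 s 0 (by simpa using h0)
  simp at this

theorem emb_inj {θ : F} (h : Ind k θ) {a b : k × k × k} (hab : (emb θ a).1 = (emb θ b).1) :
    a = b := by
  obtain ⟨c, s, t⟩ := a
  obtain ⟨c', s', t'⟩ := b
  simp only [emb] at hab
  rw [div_eq_div_iff (h.den s) (h.den s')] at hab
  have := h (c - c') (s - s') (t - t' + c * s' - c' * s) (t * s' - t' * s) (by
    simp only [map_sub, map_add, map_mul]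
    linear_combination hab)
  obtain ⟨h1, h2, h3⟩ := this
  have e1 : c = c' := by linear_combination h1
  have e2 : s = s' := by linear_combination h2
  subst e1 e2
  have e3 : t = t' := by linear_combination h3
  subst e3; rfl

theorem emb_inc {θ : F} (h : Ind k θ) (a b : k × k × k) :
    inc (emb θ a) (emb θ b) ↔ b.2.1 * a.1 + b.2.2 = a.2.1 * b.1 + a.2.2 := by
  have h1 := h.den a.2.1
  have h2 := h.den b.2.1
  rw [← (algebraMap k F).injective.eq_iff]
  simp only [map_add, map_mul, inc, emb]
  generalize algebraMap k F a.1 = c at *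
  generalize algebraMap k F a.2.1 = s at *
  generalize algebraMap k F a.2.2 = t at *
  generalize algebraMap k F b.1 = c' at *
  generalize algebraMap k F b.2.1 = s' at *
  generalize algebraMap k F b.2.2 = t' at *
  field_simp
  constructor <;> intro h <;> linear_combination h

theorem emb_reg {θ : F} (h : Ind k θ) [DecidableEq k] [DecidableEq F] (X : Finset k)
    (L : Finset (k × k)) (M : ℕ)
    (hX : X.card ≤ M) (hL : (L.image Prod.fst).card ≤ M) :
    Reg M ((X ×ˢ L).image (emb θ)) ((X ×ˢ L).image (emb θ)) := by
  intro w β γ δ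
  by_contra! hcon
  obtain ⟨h1, h2⟩ := hcon
  -- facts
  have key : ∀ a : k × k × k, (emb θ a).2.1 * (1 + θ ^ 2 * algebraMap k F a.2.1) =
      algebraMap k F a.2.1 := by
    intro a; have := h.den a.2.1; simp only [emb]; exact div_mul_cancel₀ _ this
  have key2 : ∀ a : k × k × k, algebraMap k F a.1 * (1 - θ ^ 2 * (emb θ a).2.1) =
      (emb θ a).1 - θ * (emb θ a).2.1 - θ ^ 2 * (emb θ a).2.2 := by
    intro a; have := h.den a.2.1; simp only [emb]; field_simp; ring
  have key3 : ∀ a : k × k × k, algebraMap k F a.2.1 * (1 - θ ^ 2 * (emb θ a).2.1) =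
      (emb θ a).2.1 := by
    intro a; linear_combination - key a
  set R := (X ×ˢ L).filter fun a => (emb θ a).2.1 = w * (emb θ a).1 + γ ∧
    (emb θ a).2.2 = β * (emb θ a).1 + δ with hR
  have hRc : M < R.card := by
    refine lt_of_lt_of_le h1 ?_
    refine le_trans (Finset.card_le_card ?_) (Finset.card_image_le (f := emb θ))
    intro y hy
    simp only [Finset.mem_filter] at hy
    obtain ⟨a, ha, rfl⟩ := Finset.mem_image.1 hy.1
    exact Finset.mem_image_of_mem _ (Finset.mem_filter.2 ⟨ha, hy.2⟩)
  obtain ⟨a, ha, b, hb, hab, hc⟩ : ∃ a ∈ R, ∃ b ∈ R, a ≠ b ∧ a.1 = b.1 := by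
    apply Finset.exists_ne_map_eq_of_card_lt_of_maps_to (t := X) (f := fun a : k × k × k => a.1) (by omega)
    intro a ha
    exact (Finset.mem_product.1 (Finset.mem_filter.1 ha).1).1
  obtain ⟨a', ha', b', hb', hab', hc'⟩ : ∃ a ∈ R, ∃ b ∈ R, a ≠ b ∧ a.2.1 = b.2.1 := by
    apply Finset.exists_ne_map_eq_of_card_lt_of_maps_to (t := L.image Prod.fst)
      (f := fun a : k × k × k => a.2.1) (by omega)
    intro a ha
    exact Finset.mem_image_of_mem _ (Finset.mem_product.1 (Finset.mem_filter.1 ha).1).2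
  have hne : (emb θ a).1 - (emb θ b).1 ≠ 0 := fun h0 => hab (emb_inj h (sub_eq_zero.1 h0))
  have hne' : (emb θ a').1 - (emb θ b').1 ≠ 0 := fun h0 => hab' (emb_inj h (sub_eq_zero.1 h0))
  have hw : w = 0 := by
    have e1 := key3 a'
    have e2 := key3 b'
    rw [← hc'] at e2
    rw [(Finset.mem_filter.1 ha').2.1] at e1
    rw [(Finset.mem_filter.1 hb').2.1] at e2
    have : ((emb θ a').1 - (emb θ b').1) * (1 + θ ^ 2 * algebraMap k F a'.2.1) * w = 0 := by
      linear_combination e2 - e1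
    rcases mul_eq_zero.1 this with h' | h'
    · exact absurd h' (mul_ne_zero hne' (h.den _))
    · exact h'
  have hβ : θ ^ 2 * β = 1 := by
    have e1 := key2 a
    have e2 := key2 b
    rw [← hc] at e2
    rw [(Finset.mem_filter.1 ha).2.1, (Finset.mem_filter.1 ha).2.2, hw] at e1
    rw [(Finset.mem_filter.1 hb).2.1, (Finset.mem_filter.1 hb).2.2, hw] at e2
    have : ((emb θ a).1 - (emb θ b).1) * (1 - θ ^ 2 * β) = 0 := by
      linear_combination e2 - e1
    linear_combination -((mul_eq_zero.1 this).resolve_left hne)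
  have hpos : 0 < (((X ×ˢ L).image (emb θ)).filter
    fun b => b.2.1 = w * b.1 + β ∧ b.2.2 = γ * b.1 + δ).card := by
    refine lt_of_le_of_lt (Nat.zero_le M) ?_
    convert h2
  obtain ⟨y, hy⟩ := Finset.card_pos.1 hpos
  rw [Finset.mem_filter] at hy
  obtain ⟨u, hu, rfl⟩ := Finset.mem_image.1 hy.1
  have e := key u
  rw [hy.2.1, hw, zero_mul, zero_add] at e
  have : (1 : F) = 0 := by
    linear_combination (θ ^ 2) * e - (1 + θ ^ 2 * algebraMap k F u.2.1) * hβ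
  exact one_ne_zero this

open Classical in
theorem nI_eq_card (A B : Finset (F × F × F)) : nI A B =
    ((A ×ˢ B).filter fun x : (F × F × F) × (F × F × F) => inc x.1 x.2).card := by
  rw [Finset.card_filter, Finset.sum_product]
  rfl
end

theorem ind_X (k : Type*) [Field k] : Ind k (RatFunc.X : RatFunc k) := by
  intro c s t r h
  have h' : algebraMap (Polynomial k) (RatFunc k)
      (Polynomial.C c + Polynomial.X * Polynomial.C s + Polynomial.X ^ 2 * Polynomial.C t
        + Polynomial.X ^ 4 * Polynomial.C r) = 0 := by
    simp only [RatFunc.algebraMap_eq_C] at h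
    simp only [map_add, map_mul, map_pow, RatFunc.algebraMap_C, RatFunc.algebraMap_X]
    exact h
  rw [map_eq_zero_iff _ (IsFractionRing.injective (Polynomial k) (RatFunc k))] at h'
  have h0 := congrArg (fun P => Polynomial.coeff P 0) h'
  have h1 := congrArg (fun P => Polynomial.coeff P 1) h'
  have h2 := congrArg (fun P => Polynomial.coeff P 2) h'
  simp [Polynomial.coeff_C, Polynomial.coeff_X] at h0 h1 h2
  exact ⟨h0, h1, h2⟩

theorem energy_lines (p : ℕ) [Fact p.Prime] (X : Finset (ZMod p)) (L : Finset (ZMod p × ZMod p))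
    (M n : ℕ) (hX : X.card ≤ M) (hL : (L.image Prod.fst).card ≤ M) (hn : n ≤ p)
    (hN : X.card * L.card ≤ n ^ 2) :
    (((X ×ˢ L) ×ˢ (X ×ˢ L)).filter fun q =>
      q.1.2.1 * q.1.1 + q.1.2.2 = q.2.2.1 * q.2.1 + q.2.2.2).card ≤
      1000 * (n ^ 3 + M * n ^ 2) := by
  classical
  set F := RatFunc (ZMod p)
  have hI := ind_X (ZMod p)
  set θ : F := RatFunc.X
  haveI : Infinite F := Infinite.of_injective (algebraMap (Polynomial (ZMod p)) F)
    (IsFractionRing.injective _ _)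
  haveI : CharP F p := charP_of_injective_algebraMap (algebraMap (ZMod p) F).injective p
  set A := (X ×ˢ L).image (emb θ) with hA
  have hinj : Set.InjOn (fun a : F × F × F => a.1) A := by
    intro a ha b hb hab
    obtain ⟨a, _, rfl⟩ := Finset.mem_image.1 (Finset.mem_coe.1 ha)
    obtain ⟨b, _, rfl⟩ := Finset.mem_image.1 (Finset.mem_coe.1 hb)
    rw [emb_inj hI hab]
  have hc : A.card ≤ n ^ 2 := Finset.card_image_le.trans (by rwa [Finset.card_product])
  have main := main_inc (F := F) M n (by
    intro j h1 h2 h0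
    rw [CharP.cast_eq_zero_iff F p] at h0
    exact absurd (Nat.le_of_dvd h1 h0) (by omega)) A A hinj hinj (emb_reg hI X L M hX hL) hc hc
  refine le_trans ?_ main
  rw [nI_eq_card]
  apply Finset.card_le_card_of_injOn
    (fun q => (emb θ (q.1.1, q.2.2), emb θ (q.2.1, q.1.2)))
  · intro q hq
    simp only [Finset.coe_filter, Set.mem_setOf_eq, Finset.mem_product] at hq ⊢
    refine ⟨⟨Finset.mem_image_of_mem _ ?_, Finset.mem_image_of_mem _ ?_⟩, ?_⟩
    · exact Finset.mem_product.2 ⟨hq.1.1.1, hq.1.2.2⟩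
    · exact Finset.mem_product.2 ⟨hq.1.2.1, hq.1.1.2⟩
    · rw [emb_inc hI]
      exact hq.2
  · intro q _ q' _ h
    rw [Prod.mk.injEq] at h
    have e1 := emb_inj hI (congrArg Prod.fst h.1)
    have e2 := emb_inj hI (congrArg Prod.fst h.2)
    rw [Prod.mk.injEq] at e1 e2
    exact Prod.ext (Prod.ext e1.1 e2.2) (Prod.ext e2.1 e1.2)


theorem cs_lines {k : Type*} [Field k] [DecidableEq k] (X Y : Finset k) (L : Finset (k × k)) (t : ℕ)
    (ht : ∀ l ∈ L, t ≤ (X.filter fun x => l.1 * x + l.2 ∈ Y).card) :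
    (t * L.card) ^ 2 ≤ Y.card * (((X ×ˢ L) ×ˢ (X ×ˢ L)).filter fun q =>
      q.1.2.1 * q.1.1 + q.1.2.2 = q.2.2.1 * q.2.1 + q.2.2.2).card := by
  let v : k × k × k → k := fun u => u.2.1 * u.1 + u.2.2
  let e : k → ℕ := fun y => ((X ×ˢ L).filter fun u => v u = y).card
  have h1 : t * L.card ≤ ∑ y ∈ Y, e y := by
    have e1 : ∑ y ∈ Y, e y = ((X ×ˢ L).filter fun u => v u ∈ Y).card := by
      rw [Finset.card_eq_sum_card_fiberwise (f := v) (t := Y)]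
      · refine Finset.sum_congr rfl fun y hy => ?_
        simp only [e]
        rw [Finset.filter_filter]
        congr 1
        ext u
        simp only [Finset.mem_filter]
        constructor
        · rintro ⟨h, rfl⟩; exact ⟨h, hy, rfl⟩
        · rintro ⟨h, _, h'⟩; exact ⟨h, h'⟩
      · intro u hu
        exact (Finset.mem_filter.1 hu).2
    rw [e1, Finset.card_filter, Finset.sum_product_right, mul_comm]
    refine le_trans (by rw [smul_eq_mul]) (Finset.card_nsmul_le_sum _ _ t ?_)
    intro l hl
    rw [← Finset.card_filter]
    exact ht l hl
  have h2 : ∑ y ∈ Y, e y ^ 2 ≤ (((X ×ˢ L) ×ˢ (X ×ˢ L)).filter fun q =>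
      q.1.2.1 * q.1.1 + q.1.2.2 = q.2.2.1 * q.2.1 + q.2.2.2).card := by
    have e2 : ∀ y ∈ Y, e y ^ 2 = ((((X ×ˢ L).filter fun u => v u = y) ×ˢ
      ((X ×ˢ L).filter fun u => v u = y))).card := by
      intro y _; rw [Finset.card_product, sq]
    rw [Finset.sum_congr rfl e2, ← Finset.card_biUnion]
    · apply Finset.card_le_card
      intro q hq
      obtain ⟨y, _, hq⟩ := Finset.mem_biUnion.1 hq
      rw [Finset.mem_product, Finset.mem_filter, Finset.mem_filter] at hq
      exact Finset.mem_filter.2 ⟨Finset.mem_product.2 ⟨hq.1.1, hq.2.1⟩, hq.1.2.trans hq.2.2.symm⟩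
    · intro y _ y' _ hne
      rw [Function.onFun, Finset.disjoint_left]
      intro q hq hq'
      rw [Finset.mem_product, Finset.mem_filter] at hq hq'
      exact hne (hq.1.2.symm.trans hq'.1.2)
  calc (t * L.card) ^ 2 ≤ (∑ y ∈ Y, e y) ^ 2 := Nat.pow_le_pow_left h1 2
    _ ≤ Y.card * ∑ y ∈ Y, e y ^ 2 := sq_sum_le_card_mul_sum_sq
    _ ≤ _ := Nat.mul_le_mul_left _ h2

theorem rich (p : ℕ) [Fact p.Prime] (X Y : Finset (ZMod p)) (L : Finset (ZMod p × ZMod p)) (t : ℕ)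
    (ht : ∀ l ∈ L, t ≤ (X.filter fun x => l.1 * x + l.2 ∈ Y).card) (htX : t ≤ X.card)
    (htY : t ≤ Y.card) (hs : (L.image Prod.fst).card ≤ max X.card Y.card)
    (hN : X.card * L.card ≤ p ^ 2) :
    t ^ 4 * L.card ≤ 40000000 * (X.card ^ 3 * Y.card ^ 2) := by
  have hcs := cs_lines X Y L t ht
  rcases Nat.eq_zero_or_pos (X.card * L.card) with h0 | hpos
  · rcases Nat.mul_eq_zero.1 h0 with h | h
    · have : t = 0 := by omega
      simp [this]
    · simp [h]
  set N := X.card * L.card with hNdef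
  have hp : 0 < p := (Fact.out : p.Prime).pos
  obtain ⟨r, hr⟩ : ∃ r, r = Nat.sqrt (N - 1) := ⟨_, rfl⟩
  have r1 : r ^ 2 ≤ N - 1 := by rw [hr]; exact Nat.sqrt_le' _
  have r2 : N - 1 < (r + 1) ^ 2 := by rw [hr]; exact Nat.lt_succ_sqrt' _
  have r3 : r + 1 ≤ p := by
    by_contra! hcon
    have : p ≤ r := by omega
    have := Nat.pow_le_pow_left this 2
    omega
  have hE := energy_lines p X L (max X.card Y.card) (r + 1) (le_max_left _ _) hs r3 (by omega)
  have r4 : (r + 1) ^ 2 ≤ 2 * N := by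
    have : r ^ 2 + 1 ≤ N := by omega
    zify at *
    nlinarith [sq_nonneg ((r : ℤ) - 1)]
  have hb := hcs.trans (Nat.mul_le_mul_left _ hE)
  generalize (((X ×ˢ L) ×ˢ (X ×ˢ L)).filter fun q =>
      q.1.2.1 * q.1.1 + q.1.2.2 = q.2.2.1 * q.2.1 + q.2.2.2).card = E at *
  clear hcs hE ht hs r1 r2 r3
  have hLpos : 0 < L.card := Nat.pos_of_mul_pos_left hpos
  generalize X.card = x at *
  generalize Y.card = y at *
  generalize L.card = l at *
  generalize r + 1 = n at *
  have key : ∀ M, t ^ 2 * l ^ 2 ≤ y * (2000 * (M * n ^ 2)) → t ^ 2 * l ≤ 4000 * (y * M * x) := by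
    intro M h
    have h1 : t ^ 2 * l ^ 2 ≤ 2000 * (y * M) * (2 * N) := by
      calc _ ≤ y * (2000 * (M * n ^ 2)) := h
        _ = 2000 * (y * M) * n ^ 2 := by ring
        _ ≤ _ := Nat.mul_le_mul_left _ r4
    have h2 : (t ^ 2 * l) * l ≤ (4000 * (y * M * x)) * l := by
      calc _ = t ^ 2 * l ^ 2 := by ring
        _ ≤ _ := h1
        _ = _ := by rw [hNdef]; ring
    exact Nat.le_of_mul_le_mul_right h2 hLpos
  rcases le_total (max x y) n with hc | hc
  · have h1 : t ^ 2 * l ^ 2 ≤ 2000 * (y * n ^ 3) := by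
      have : max x y * n ^ 2 ≤ n * n ^ 2 := Nat.mul_le_mul_right _ hc
      calc _ = (t * l) ^ 2 := by ring
        _ ≤ _ := hb
        _ ≤ y * (1000 * (n ^ 3 + n * n ^ 2)) := by gcongr
        _ = _ := by ring
    have h2 : (t ^ 4 * l) * l ^ 3 ≤ 32000000 * (x ^ 3 * y ^ 2) * l ^ 3 := by
      calc _ = (t ^ 2 * l ^ 2) ^ 2 := by ring
        _ ≤ (2000 * (y * n ^ 3)) ^ 2 := Nat.pow_le_pow_left h1 2
        _ = 4000000 * y ^ 2 * (n ^ 2) ^ 3 := by ring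
        _ ≤ 4000000 * y ^ 2 * (2 * N) ^ 3 := by gcongr
        _ = _ := by rw [hNdef]; ring
    have h3 := Nat.le_of_mul_le_mul_right h2 (pow_pos hLpos 3)
    omega
  · have h1 : t ^ 2 * l ^ 2 ≤ y * (2000 * (max x y * n ^ 2)) := by
      have : n ^ 3 ≤ max x y * n ^ 2 := by
        calc n ^ 3 = n * n ^ 2 := by ring
          _ ≤ _ := Nat.mul_le_mul_right _ hc
      calc _ = (t * l) ^ 2 := by ring
        _ ≤ _ := hb
        _ ≤ y * (1000 * (max x y * n ^ 2 + max x y * n ^ 2)) := by gcongr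
        _ = _ := by ring
    have h2 := key _ h1
    have h3 : t ^ 4 * l ≤ 4000 * (x ^ 3 * y ^ 2) := by
      rcases le_total x y with h | h
      · rw [max_eq_right h] at h2
        calc t ^ 4 * l = t ^ 2 * (t ^ 2 * l) := by ring
          _ ≤ x ^ 2 * (4000 * (y * y * x)) := by gcongr
          _ = _ := by ring
      · rw [max_eq_left h] at h2
        calc t ^ 4 * l = t * t * (t ^ 2 * l) := by ring
          _ ≤ x * y * (4000 * (y * x * x)) := by gcongr
          _ = _ := by ring
    omega


theorem level_sum {ι : Type*} [Fintype ι] (r : ι → ℕ) (a M W K : ℕ) (ha : 0 < a) (hM : 0 < M)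
    (h1 : ∑ x, r x ≤ M) (h2 : ∀ x, r x ^ 3 * M ≤ W)
    (h3 : ∀ t, 0 < t → t ^ 4 * (Finset.univ.filter fun x => t ≤ r x).card * a ≤ K * W) :
    a * ∑ x, r x ^ 4 ≤ (1 + 16 * K) * W * (Nat.log 2 a + 1) := by
  classical
  set J := Nat.log 2 a + 1 with hJ
  have hpt : ∀ x, a * r x ^ 4 ≤ (if a * r x ^ 3 * M ≤ W then a * r x ^ 4 else 0) +
      ∑ j ∈ Finset.range J, if 8 ^ j * W < a * r x ^ 3 * M ∧ a * r x ^ 3 * M ≤ 8 ^ (j + 1) * W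
        then a * r x ^ 4 else 0 := by
    intro x
    by_cases hx : a * r x ^ 3 * M ≤ W
    · rw [if_pos hx]; omega
    · rw [if_neg hx, zero_add]
      push Not at hx
      have hup : a * r x ^ 3 * M ≤ a * W := by
        calc _ = a * (r x ^ 3 * M) := by ring
          _ ≤ _ := Nat.mul_le_mul_left _ (h2 x)
      have hW : 0 < W := by
        rcases Nat.eq_zero_or_pos W with h | h
        · rw [h] at hup hx; omega
        · exact h
      have hex : ∃ j, a * r x ^ 3 * M ≤ 8 ^ j * W :=
        ⟨a, hup.trans (Nat.mul_le_mul_right _ (Nat.lt_pow_self (by norm_num)).le)⟩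
      have hspec := Nat.find_spec hex
      obtain ⟨i, hi⟩ : ∃ i, Nat.find hex = i + 1 := by
        apply Nat.exists_eq_succ_of_ne_zero
        intro h0
        rw [h0] at hspec
        omega
      have hmin : 8 ^ i * W < a * r x ^ 3 * M := by
        have := Nat.find_min hex (m := i) (by omega)
        omega
      rw [hi] at hspec
      have hlt : 8 ^ i < a := lt_of_mul_lt_mul_right (hmin.trans_le hup) (Nat.zero_le W)
      have hiJ : i ∈ Finset.range J := by
        rw [Finset.mem_range, hJ, Nat.lt_succ_iff]
        apply Nat.le_log_of_pow_le (by norm_num)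
        exact (Nat.pow_le_pow_left (by norm_num : 2 ≤ 8) i).trans hlt.le
      calc a * r x ^ 4 = if 8 ^ i * W < a * r x ^ 3 * M ∧ a * r x ^ 3 * M ≤ 8 ^ (i + 1) * W
        then a * r x ^ 4 else 0 := by rw [if_pos ⟨hmin, hspec⟩]
        _ ≤ _ := Finset.single_le_sum (f := fun j => if 8 ^ j * W < a * r x ^ 3 * M ∧
          a * r x ^ 3 * M ≤ 8 ^ (j + 1) * W then a * r x ^ 4 else 0)
          (fun _ _ => Nat.zero_le _) hiJ
  rw [Finset.mul_sum]
  refine (Finset.sum_le_sum fun x _ => hpt x).trans ?_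
  rw [Finset.sum_add_distrib, Finset.sum_comm]
  have e1 : ∑ x, (if a * r x ^ 3 * M ≤ W then a * r x ^ 4 else 0) ≤ W := by
    have : M * ∑ x, (if a * r x ^ 3 * M ≤ W then a * r x ^ 4 else 0) ≤ M * W := by
      rw [Finset.mul_sum]
      calc _ ≤ ∑ x, r x * W := by
            apply Finset.sum_le_sum
            intro x _
            split_ifs with h
            · calc M * (a * r x ^ 4) = r x * (a * r x ^ 3 * M) := by ring
                _ ≤ _ := Nat.mul_le_mul_left _ h
            · simp
        _ = (∑ x, r x) * W := by rw [Finset.sum_mul]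
        _ ≤ _ := Nat.mul_le_mul_right _ h1
    exact Nat.le_of_mul_le_mul_left this hM
  have e2 : ∀ j ∈ Finset.range J, (∑ x, if 8 ^ j * W < a * r x ^ 3 * M ∧
      a * r x ^ 3 * M ≤ 8 ^ (j + 1) * W then a * r x ^ 4 else 0) ≤ 16 * K * W := by
    intro j _
    rw [← Finset.sum_filter]
    set S := Finset.univ.filter fun x => 8 ^ j * W < a * r x ^ 3 * M ∧
      a * r x ^ 3 * M ≤ 8 ^ (j + 1) * W with hS
    rcases S.eq_empty_or_nonempty with h | h
    · rw [h]; simp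
    obtain ⟨x0, hx0, hmin⟩ := Finset.exists_min_image S r h
    have m0 := (Finset.mem_filter.1 hx0).2
    have hr0 : 0 < r x0 := by
      rcases Nat.eq_zero_or_pos (r x0) with h | h
      · rw [h] at m0; simp at m0
      · exact h
    have hb : ∀ x ∈ S, a * r x ^ 4 ≤ a * (2 * r x0) ^ 4 := by
      intro x hx
      have m1 := (Finset.mem_filter.1 hx).2
      have h8 : r x ^ 3 * (a * M) < (2 * r x0) ^ 3 * (a * M) := by
        calc r x ^ 3 * (a * M) = a * r x ^ 3 * M := by ring
          _ ≤ 8 * (8 ^ j * W) := m1.2.trans_eq (by ring)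
          _ < 8 * (a * r x0 ^ 3 * M) := by have := m0.1; omega
          _ = _ := by ring
      have h9 := lt_of_mul_lt_mul_right h8 (Nat.zero_le _)
      have h10 := lt_of_pow_lt_pow_left₀ 3 (Nat.zero_le _) h9
      gcongr
    refine (Finset.sum_le_card_nsmul _ _ _ hb).trans ?_
    have hc : S.card ≤ (Finset.univ.filter fun x => r x0 ≤ r x).card := by
      apply Finset.card_le_card
      intro x hx
      exact Finset.mem_filter.2 ⟨Finset.mem_univ _, hmin x hx⟩
    calc S.card • (a * (2 * r x0) ^ 4) = 16 * (r x0 ^ 4 * S.card * a) := by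
          rw [smul_eq_mul]; ring
      _ ≤ 16 * (r x0 ^ 4 * (Finset.univ.filter fun x => r x0 ≤ r x).card * a) := by gcongr
      _ ≤ 16 * (K * W) := Nat.mul_le_mul_left _ (h3 _ hr0)
      _ = _ := by ring
  have e3 := (Finset.sum_le_card_nsmul _ _ _ e2)
  rw [Finset.card_range, smul_eq_mul] at e3
  have hJ1 : 1 ≤ J := by omega
  calc _ ≤ W + J * (16 * K * W) := add_le_add e1 e3
    _ ≤ J * W + J * (16 * K * W) := by gcongr; nlinarith
    _ = _ := by ring

theorem rSub_le1 {p : ℕ} (B C : Finset (ZMod p)) (x : ZMod p) :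
    rSub B C x ≤ (C.filter fun c => x + c ∈ B).card := by
  apply Finset.card_le_card_of_injOn Prod.snd
  · rintro ⟨b, c⟩ h
    simp only [Finset.coe_filter, Set.mem_setOf_eq, Finset.mem_product] at h ⊢
    refine ⟨h.1.2, ?_⟩
    rw [← h.2]; simpa using h.1.1
  · rintro ⟨b, c⟩ h ⟨b', c'⟩ h' hh
    simp only [Finset.coe_filter, Set.mem_setOf_eq, Finset.mem_product] at h h' hh
    subst hh
    have : b = b' := by linear_combination h.2 - h'.2
    rw [this]

theorem rSub_le2 {p : ℕ} (B C : Finset (ZMod p)) (x : ZMod p) :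
    rSub B C x ≤ (B.filter fun b => b - x ∈ C).card := by
  apply Finset.card_le_card_of_injOn Prod.fst
  · rintro ⟨b, c⟩ h
    simp only [Finset.coe_filter, Set.mem_setOf_eq, Finset.mem_product] at h ⊢
    refine ⟨h.1.1, ?_⟩
    rw [← h.2]; simpa using h.1.2
  · rintro ⟨b, c⟩ h ⟨b', c'⟩ h' hh
    simp only [Finset.coe_filter, Set.mem_setOf_eq, Finset.mem_product] at h h' hh
    subst hh
    have : c = c' := by linear_combination h'.2 - h.2
    rw [this]

theorem rSub_leC {p : ℕ} (B C : Finset (ZMod p)) (x : ZMod p) : rSub B C x ≤ C.card :=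
  (rSub_le1 B C x).trans (Finset.card_le_card (Finset.filter_subset _ _))

theorem rSub_leB {p : ℕ} (B C : Finset (ZMod p)) (x : ZMod p) : rSub B C x ≤ B.card :=
  (rSub_le2 B C x).trans (Finset.card_le_card (Finset.filter_subset _ _))

theorem rSub_sum {p : ℕ} [NeZero p] (B C : Finset (ZMod p)) :
    ∑ x, rSub B C x = B.card * C.card := by
  rw [← Finset.card_product]
  exact (Finset.card_eq_sum_card_fiberwise (f := fun bc : ZMod p × ZMod p => bc.1 - bc.2)
    (t := Finset.univ) (by intro _ _; simp)).symm

section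
variable {p : ℕ} [Fact p.Prime] (g h : ZMod p → ZMod p) (A B C : Finset (ZMod p))

theorem fcard_ge (hA : A.Nonempty) (hg : ∀ a ∈ A, g a ≠ 0) :
    B.card ≤ (Finset.image₂ (fun x y => g x * (h x + y)) A B).card := by
  obtain ⟨a, ha⟩ := hA
  apply Finset.card_le_card_of_injOn (fun y => g a * (h a + y))
  · intro y hy
    exact Finset.mem_image₂_of_mem ha hy
  · intro y _ y' _ hh
    exact add_left_cancel (mul_left_cancel₀ (hg a ha) hh)

theorem level1 (hA : A.Nonempty) (hg : ∀ a ∈ A, g a ≠ 0) (hinj : Set.InjOn g A)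
    (hAB : A.card ≤ B.card) (t : ℕ) (f : ℕ)
    (hf : f = (Finset.image₂ (fun x y => g x * (h x + y)) A B).card)
    (hN : C.card * (A.card * (Finset.univ.filter fun x => t ≤ rSub B C x).card) ≤ p ^ 2) :
    t ^ 4 * (A.card * (Finset.univ.filter fun x => t ≤ rSub B C x).card) ≤
      40000000 * (C.card ^ 3 * f ^ 2) := by
  have hBf := fcard_ge g h A B hA hg
  set Y := Finset.image₂ (fun x y => g x * (h x + y)) A B with hY
  set D := Finset.univ.filter fun x => t ≤ rSub B C x with hD
  rcases D.eq_empty_or_nonempty with h0 | ⟨x0, hx0⟩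
  · rw [h0]; simp
  have hx0' := (Finset.mem_filter.1 hx0).2
  set L := (A ×ˢ D).image (fun u => (g u.1, g u.1 * (h u.1 + u.2))) with hL
  have hLc : L.card = A.card * D.card := by
    rw [hL, Finset.card_image_of_injOn, Finset.card_product]
    rintro ⟨a, x⟩ hu ⟨a', x'⟩ hu' hh
    simp only [Finset.coe_product, Set.mem_prod, Finset.mem_coe, Prod.mk.injEq] at hu hu' hh
    have e1 : a = a' := hinj hu.1 hu'.1 hh.1
    subst e1
    rw [add_left_cancel (mul_left_cancel₀ (hg a hu.1) hh.2)]
  rw [hf, ← hLc]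
  apply rich p C Y L t
  · intro l hl
    obtain ⟨⟨a, x⟩, hu, rfl⟩ := Finset.mem_image.1 hl
    rw [Finset.mem_product] at hu
    refine ((Finset.mem_filter.1 hu.2).2.trans (rSub_le1 B C x)).trans (Finset.card_le_card ?_)
    intro c hc
    rw [Finset.mem_filter] at hc ⊢
    refine ⟨hc.1, ?_⟩
    have := Finset.mem_image₂_of_mem (f := fun x y => g x * (h x + y)) hu.1 hc.2
    convert this using 1
    simp only; ring
  · exact hx0'.trans (rSub_leC B C x0)
  · exact (hx0'.trans (rSub_leB B C x0)).trans hBf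
  · refine le_trans ?_ (le_max_right _ _)
    refine le_trans ?_ (hAB.trans hBf)
    refine le_trans (Finset.card_le_card ?_) (Finset.card_image_le (f := g) (s := A))
    intro s hs
    obtain ⟨l, hl, rfl⟩ := Finset.mem_image.1 hs
    obtain ⟨u, hu, rfl⟩ := Finset.mem_image.1 hl
    exact Finset.mem_image_of_mem _ (Finset.mem_product.1 hu).1
  · rwa [hLc]

theorem level2 (hA : A.Nonempty) (hg : ∀ a ∈ A, g a ≠ 0) (hinj : Set.InjOn g A)
    (hAB : A.card ≤ B.card) (t : ℕ) (f : ℕ)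
    (hf : f = (Finset.image₂ (fun x y => g x * (h x + y)) A B).card)
    (hN : f * (A.card * (Finset.univ.filter fun x => t ≤ rSub B C x).card) ≤ p ^ 2) :
    t ^ 4 * (A.card * (Finset.univ.filter fun x => t ≤ rSub B C x).card) ≤
      40000000 * (f ^ 3 * C.card ^ 2) := by
  have hBf := fcard_ge g h A B hA hg
  set Y := Finset.image₂ (fun x y => g x * (h x + y)) A B with hY
  set D := Finset.univ.filter fun x => t ≤ rSub B C x with hD
  rcases D.eq_empty_or_nonempty with h0 | ⟨x0, hx0⟩
  · rw [h0]; simp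
  have hx0' := (Finset.mem_filter.1 hx0).2
  set L := (A ×ˢ D).image (fun u => ((g u.1)⁻¹, - (h u.1 + u.2))) with hL
  have hLc : L.card = A.card * D.card := by
    rw [hL, Finset.card_image_of_injOn, Finset.card_product]
    rintro ⟨a, x⟩ hu ⟨a', x'⟩ hu' hh
    simp only [Finset.coe_product, Set.mem_prod, Finset.mem_coe, Prod.mk.injEq] at hu hu' hh
    have e1 : a = a' := hinj hu.1 hu'.1 (inv_injective hh.1)
    subst e1
    rw [add_left_cancel (neg_injective hh.2)]
  rw [hf, ← hLc] at hN ⊢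
  apply rich p Y C L t
  · intro l hl
    obtain ⟨⟨a, x⟩, hu, rfl⟩ := Finset.mem_image.1 hl
    rw [Finset.mem_product] at hu
    have hga := hg a hu.1
    refine ((Finset.mem_filter.1 hu.2).2.trans (rSub_le2 B C x)).trans ?_
    apply Finset.card_le_card_of_injOn (fun y => g a * (h a + y))
    · intro b hb
      simp only [Finset.coe_filter, Set.mem_setOf_eq] at hb ⊢
      refine ⟨Finset.mem_image₂_of_mem (f := fun x y => g x * (h x + y)) hu.1 hb.1, ?_⟩
      have : (g a)⁻¹ * (g a * (h a + b)) + -(h a + x) = b - x := by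
        rw [inv_mul_cancel_left₀ hga]; ring
      rw [this]; exact hb.2
    · intro y _ y' _ hh
      exact add_left_cancel (mul_left_cancel₀ hga hh)
  · exact (hx0'.trans (rSub_leB B C x0)).trans hBf
  · exact hx0'.trans (rSub_leC B C x0)
  · refine le_trans ?_ (le_max_left _ _)
    refine le_trans ?_ (hAB.trans hBf)
    refine le_trans (Finset.card_le_card ?_) (Finset.card_image_le (f := fun a => (g a)⁻¹) (s := A))
    intro s hs
    obtain ⟨l, hl, rfl⟩ := Finset.mem_image.1 hs
    obtain ⟨u, hu, rfl⟩ := Finset.mem_image.1 hl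
    exact Finset.mem_image_of_mem (fun a => (g a)⁻¹) (Finset.mem_product.1 hu).1
  · exact hN

theorem D_card (t : ℕ) :
    t * (Finset.univ.filter fun x => t ≤ rSub B C x).card ≤ B.card * C.card := by
  rw [← rSub_sum, mul_comm]
  refine le_trans (by rw [smul_eq_mul]) ((Finset.card_nsmul_le_sum _ (rSub B C) t
    (fun x hx => (Finset.mem_filter.1 hx).2)).trans ?_)
  exact Finset.sum_le_sum_of_subset (Finset.filter_subset _ _)

theorem ten_le {a b c x q i j l : ℕ} (ha : a ^ 5 ≤ q ^ 3) (hb : b ^ 5 ≤ q ^ 3) (hc : c ^ 5 ≤ q ^ 3)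
    (hijl : i + j + l = 10) (hx : x ^ 3 ≤ a ^ i * b ^ j * c ^ l) : x ≤ q ^ 2 := by
  have : x ^ 15 ≤ (q ^ 2) ^ 15 := by
    calc x ^ 15 = (x ^ 3) ^ 5 := by ring
      _ ≤ (a ^ i * b ^ j * c ^ l) ^ 5 := Nat.pow_le_pow_left hx 5
      _ = (a ^ 5) ^ i * (b ^ 5) ^ j * (c ^ 5) ^ l := by
        rw [mul_pow, mul_pow, ← pow_mul, ← pow_mul, ← pow_mul, ← pow_mul, ← pow_mul, ← pow_mul,
          mul_comm i, mul_comm j, mul_comm l]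
      _ ≤ (q ^ 3) ^ i * (q ^ 3) ^ j * (q ^ 3) ^ l := by gcongr
      _ = (q ^ 3) ^ (i + j + l) := by rw [pow_add, pow_add]
      _ = _ := by rw [hijl]; ring
  exact le_of_pow_le_pow_left₀ (by norm_num) (Nat.zero_le _) this

theorem lev1 (hA : A.Nonempty) (hB : B.Nonempty) (hC : C.Nonempty)
    (hg : ∀ a ∈ A, g a ≠ 0) (hinj : Set.InjOn g A)
    (hAB : A.card ≤ B.card) (hA5 : A.card ^ 5 ≤ p ^ 3) (hB5 : B.card ^ 5 ≤ p ^ 3)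
    (hC5 : C.card ^ 5 ≤ p ^ 3) (t : ℕ) (f : ℕ)
    (hf : f = (Finset.image₂ (fun x y => g x * (h x + y)) A B).card) :
    t ^ 4 * (Finset.univ.filter fun x => t ≤ rSub B C x).card * A.card ≤
      40000000 * (C.card ^ 3 * f ^ 2) := by
  have hl := level1 g h A B C hA hg hinj hAB t f hf
  have hd := D_card B C t
  have hBf := fcard_ge g h A B hA hg
  rw [← hf] at hBf
  generalize (Finset.univ.filter fun x => t ≤ rSub B C x).card = d at *
  have hb := hB.card_pos
  have hc := hC.card_pos
  generalize A.card = a at *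
  generalize B.card = b at *
  generalize C.card = c at *
  by_cases hcase : t ^ 3 * (b * c) * a ≤ c ^ 3 * f ^ 2
  · calc t ^ 4 * d * a = t ^ 3 * (t * d) * a := by ring
      _ ≤ t ^ 3 * (b * c) * a := by gcongr
      _ ≤ _ := hcase
      _ ≤ _ := by omega
  · push Not at hcase
    calc t ^ 4 * d * a = t ^ 4 * (a * d) := by ring
      _ ≤ _ := hl ?_
    apply ten_le (i := 4) (j := 2) (l := 4) hA5 hB5 hC5 (by norm_num)
    have h1 : c ^ 2 * b < t ^ 3 * a := by
      have : (c ^ 2 * b) * (b * c) < (t ^ 3 * a) * (b * c) := by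
        calc (c ^ 2 * b) * (b * c) = c ^ 3 * b ^ 2 := by ring
          _ ≤ c ^ 3 * f ^ 2 := by gcongr
          _ < _ := hcase
          _ = _ := by ring
      exact lt_of_mul_lt_mul_right this (Nat.zero_le _)
    have h2 : (c * (a * d)) ^ 3 * (c ^ 2 * b) ≤ (a ^ 4 * b ^ 2 * c ^ 4) * (c ^ 2 * b) := by
      calc (c * (a * d)) ^ 3 * (c ^ 2 * b) ≤ (c * (a * d)) ^ 3 * (t ^ 3 * a) := by gcongr
        _ = c ^ 3 * a ^ 4 * (t * d) ^ 3 := by ring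
        _ ≤ c ^ 3 * a ^ 4 * (b * c) ^ 3 := by gcongr
        _ = _ := by ring
    exact Nat.le_of_mul_le_mul_right h2 (by positivity)

theorem lev2 (hA : A.Nonempty) (hB : B.Nonempty) (hC : C.Nonempty)
    (hg : ∀ a ∈ A, g a ≠ 0) (hinj : Set.InjOn g A)
    (hAB : A.card ≤ B.card) (hA5 : A.card ^ 5 ≤ p ^ 3) (hB5 : B.card ^ 5 ≤ p ^ 3)
    (hC5 : C.card ^ 5 ≤ p ^ 3) (t : ℕ) (f : ℕ)
    (hf : f = (Finset.image₂ (fun x y => g x * (h x + y)) A B).card) :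
    t ^ 4 * (Finset.univ.filter fun x => t ≤ rSub B C x).card * A.card ≤
      40000000 * (f ^ 3 * C.card ^ 2) := by
  have hl := level2 g h A B C hA hg hinj hAB t f hf
  have hd := D_card B C t
  have hBf := fcard_ge g h A B hA hg
  rw [← hf] at hBf
  generalize (Finset.univ.filter fun x => t ≤ rSub B C x).card = d at *
  have hb := hB.card_pos
  have hc := hC.card_pos
  generalize A.card = a at *
  generalize B.card = b at *
  generalize C.card = c at *
  by_cases hcase : t ^ 3 * (b * c) * a ≤ f ^ 3 * c ^ 2
  · calc t ^ 4 * d * a = t ^ 3 * (t * d) * a := by ring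
      _ ≤ t ^ 3 * (b * c) * a := by gcongr
      _ ≤ _ := hcase
      _ ≤ _ := by omega
  · push Not at hcase
    calc t ^ 4 * d * a = t ^ 4 * (a * d) := by ring
      _ ≤ _ := hl ?_
    apply ten_le (i := 4) (j := 4) (l := 2) hA5 hB5 hC5 (by norm_num)
    have hf0 : 0 < f := by omega
    have h1 : f ^ 3 * c < t ^ 3 * a * b := by
      have : (f ^ 3 * c) * c < (t ^ 3 * a * b) * c := by
        calc (f ^ 3 * c) * c = f ^ 3 * c ^ 2 := by ring
          _ < _ := hcase
          _ = _ := by ring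
      exact lt_of_mul_lt_mul_right this (Nat.zero_le _)
    have h2 : (f * (a * d)) ^ 3 * (f ^ 3 * c) ≤ (a ^ 4 * b ^ 4 * c ^ 2) * (f ^ 3 * c) := by
      calc (f * (a * d)) ^ 3 * (f ^ 3 * c) ≤ (f * (a * d)) ^ 3 * (t ^ 3 * a * b) := by gcongr
        _ = f ^ 3 * a ^ 4 * b * (t * d) ^ 3 := by ring
        _ ≤ f ^ 3 * a ^ 4 * b * (b * c) ^ 3 := by gcongr
        _ = _ := by ring
    exact Nat.le_of_mul_le_mul_right h2 (by positivity)

theorem nat_bound (hA : A.Nonempty) (hB : B.Nonempty) (hC : C.Nonempty)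
    (hg : ∀ a ∈ A, g a ≠ 0) (hinj : Set.InjOn g A)
    (hAB : A.card ≤ B.card) (hA5 : A.card ^ 5 ≤ p ^ 3) (hB5 : B.card ^ 5 ≤ p ^ 3)
    (hC5 : C.card ^ 5 ≤ p ^ 3) (f : ℕ)
    (hf : f = (Finset.image₂ (fun x y => g x * (h x + y)) A B).card) :
    A.card * E4 B C ≤ 1000000000 * (f ^ 3 * C.card ^ 2) * (Nat.log 2 A.card + 1) ∧
    A.card * E4 B C ≤ 1000000000 * (f ^ 2 * C.card ^ 3) * (Nat.log 2 A.card + 1) := by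
  have hBf := fcard_ge g h A B hA hg
  rw [← hf] at hBf
  have hM : 0 < B.card * C.card := Nat.mul_pos hB.card_pos hC.card_pos
  constructor
  · refine (level_sum (rSub B C) A.card (B.card * C.card) (f ^ 3 * C.card ^ 2) 40000000 hA.card_pos
      hM (rSub_sum B C).le ?_ ?_).trans ?_
    · intro x
      calc rSub B C x ^ 3 * (B.card * C.card) =
          rSub B C x * rSub B C x * rSub B C x * (B.card * C.card) := by ring
        _ ≤ B.card * B.card * C.card * (B.card * C.card) := by
          gcongr <;> first | exact rSub_leB B C x | exact rSub_leC B C x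
        _ = B.card ^ 3 * C.card ^ 2 := by ring
        _ ≤ _ := by gcongr
    · intro t _
      exact lev2 g h A B C hA hB hC hg hinj hAB hA5 hB5 hC5 t f hf
    · gcongr; norm_num
  · refine (level_sum (rSub B C) A.card (B.card * C.card) (f ^ 2 * C.card ^ 3) 40000000 hA.card_pos
      hM (rSub_sum B C).le ?_ ?_).trans ?_
    · intro x
      calc rSub B C x ^ 3 * (B.card * C.card) =
          rSub B C x * rSub B C x * rSub B C x * (B.card * C.card) := by ring
        _ ≤ B.card * C.card * C.card * (B.card * C.card) := by
          gcongr <;> first | exact rSub_leB B C x | exact rSub_leC B C x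
        _ = B.card ^ 2 * C.card ^ 3 := by ring
        _ ≤ _ := by gcongr
    · intro t _
      rw [mul_comm (f ^ 2)]
      exact lev1 g h A B C hA hB hC hg hinj hAB hA5 hB5 hC5 t f hf
    · gcongr; norm_num
end

theorem mu_bound {p : ℕ} [Fact p.Prime] (g : ZMod p → ZMod p)
    (hg : ∀ x : ZMod p, x ≠ 0 → g x ≠ 0) (A : Finset (ZMod p)) (hA0 : (0 : ZMod p) ∉ A) :
    ∃ A' ⊆ A, Set.InjOn g A' ∧ A.card ≤ mu g * A'.card := by
  classical
  obtain ⟨A', hA', hinj, him⟩ : ∃ A' ⊆ A, Set.InjOn g A' ∧ A'.image g = A.image g := by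
    have hx : ∀ y ∈ A.image g, ∃ x ∈ A, g x = y := fun y hy => Finset.mem_image.1 hy
    choose! s hs1 hs2 using hx
    refine ⟨(A.image g).image s, ?_, ?_, ?_⟩
    · intro x hx
      obtain ⟨y, hy, rfl⟩ := Finset.mem_image.1 hx
      exact hs1 y hy
    · intro x hx x' hx' hh
      obtain ⟨y, hy, rfl⟩ := Finset.mem_image.1 (Finset.mem_coe.1 hx)
      obtain ⟨y', hy', rfl⟩ := Finset.mem_image.1 (Finset.mem_coe.1 hx')
      rw [hs2 y hy, hs2 y' hy'] at hh
      rw [hh]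
    · rw [Finset.image_image]
      conv_rhs => rw [← Finset.image_id (s := A.image g)]
      apply Finset.image_congr
      intro y hy
      exact hs2 y (Finset.mem_coe.1 hy)
  refine ⟨A', hA', hinj, ?_⟩
  rw [← Finset.card_image_of_injOn hinj, him]
  apply Finset.card_le_mul_card_image
  intro y hy
  obtain ⟨x, hx, rfl⟩ := Finset.mem_image.1 hy
  have hx0 : x ≠ 0 := fun h => hA0 (h ▸ hx)
  refine le_trans (Finset.card_le_card ?_) (Finset.le_sup (f := fun t =>
    (Finset.univ.filter fun x : ZMod p => x ≠ 0 ∧ g x = t).card)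
    (Finset.mem_filter.2 ⟨Finset.mem_univ (g x), hg x hx0⟩))
  intro z hz
  rw [Finset.mem_filter] at hz
  exact Finset.mem_filter.2 ⟨Finset.mem_univ _, fun h => hA0 (h ▸ hz.1), hz.2⟩

theorem pow5_le {n p : ℕ} (h : (n : ℝ) ≤ (p : ℝ) ^ ((3 : ℝ) / 5)) : n ^ 5 ≤ p ^ 3 := by
  have h1 : (n : ℝ) ^ 5 ≤ ((p : ℝ) ^ ((3 : ℝ) / 5)) ^ 5 := pow_le_pow_left₀ (by positivity) h 5
  rw [← Real.rpow_natCast, ← Real.rpow_natCast, ← Real.rpow_mul (by positivity)] at h1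
  norm_num at h1
  exact_mod_cast h1

theorem log_bound (a : ℕ) (ha : 0 < a) : ((Nat.log 2 a + 1 : ℕ) : ℝ) ≤ 2 * Real.log (2 * a) := by
  have ha' : (0 : ℝ) < a := by exact_mod_cast ha
  have h1 : (2 : ℝ) ^ (Nat.log 2 a) ≤ a := by exact_mod_cast Nat.pow_log_le_self 2 ha.ne'
  have h2 := Real.log_le_log (by positivity) h1
  rw [Real.log_pow] at h2
  have h3 := Real.log_two_gt_d9
  rw [Real.log_mul (by norm_num) ha'.ne']
  push_cast
  have : (0 : ℝ) ≤ (Nat.log 2 a : ℝ) := by positivity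
  nlinarith

theorem fin_real {E a0 a m f0 f : ℕ} {U : ℕ → ℝ} {l : ℝ} (ha : 0 < a) (ha0 : 0 < a0) (hm : 1 ≤ m)
    (h1 : a0 ≤ m * a) (haa : a ≤ a0) (hl : ((Nat.log 2 a + 1 : ℕ) : ℝ) ≤ 2 * l) (hU : U f ≤ U f0)
    (hU0 : 0 ≤ U f)
    (hE : (a : ℝ) * E ≤ 1000000000 * U f * ((Nat.log 2 a + 1 : ℕ) : ℝ)) :
    (E : ℝ) ≤ 2000000000 * (m : ℝ) ^ 4 * (U f0 / a0) * l := by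
  have ha' : (0 : ℝ) < a := by exact_mod_cast ha
  have ha0' : (0 : ℝ) < a0 := by exact_mod_cast ha0
  have hm' : (1 : ℝ) ≤ m := by exact_mod_cast hm
  have h1' : (a0 : ℝ) ≤ m * a := by exact_mod_cast h1
  have hl0 : 0 ≤ l := by
    have : (0 : ℝ) ≤ ((Nat.log 2 a + 1 : ℕ) : ℝ) := by positivity
    linarith
  have e1 : (a : ℝ) * E ≤ 2000000000 * (U f0 * l) := by
    calc (a : ℝ) * E ≤ 1000000000 * U f * ((Nat.log 2 a + 1 : ℕ) : ℝ) := hE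
      _ ≤ 1000000000 * U f0 * (2 * l) := by
        apply mul_le_mul (by linarith) hl (by positivity) (by linarith)
      _ = _ := by ring
  have e2 : (a0 : ℝ) * E ≤ m ^ 4 * (2000000000 * (U f0 * l)) := by
    calc (a0 : ℝ) * E ≤ m * a * E := by gcongr
      _ = m * (a * E) := by ring
      _ ≤ m * (2000000000 * (U f0 * l)) := by gcongr
      _ ≤ m ^ 4 * (2000000000 * (U f0 * l)) := by
        have : 0 ≤ U f0 := hU0.trans hU
        have hmm : (m : ℝ) ≤ m ^ 4 := by
          calc (m : ℝ) = m ^ 1 := by ring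
            _ ≤ m ^ 4 := pow_le_pow_right₀ hm' (by norm_num)
        gcongr
  have : 2000000000 * (m : ℝ) ^ 4 * (U f0 / a0) * l = m ^ 4 * (2000000000 * (U f0 * l)) / a0 := by
    field_simp
  rw [this, le_div_iff₀ ha0', mul_comm]
  exact e2


theorem fourth_difference_energy_bound :
    ∃ C > (0:ℝ),
      ∀ (p : ℕ) [Fact p.Prime], p ≠ 2 →
      ∀ g h : ZMod p → ZMod p,
      (∀ x : ZMod p, x ≠ 0 → g x ≠ 0) → (∀ x : ZMod p, x ≠ 0 → h x ≠ 0) →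
      ∀ A B Cs : Finset (ZMod p),
      A.Nonempty → B.Nonempty → Cs.Nonempty →
      (0:ZMod p) ∉ A → (0:ZMod p) ∉ B → (0:ZMod p) ∉ Cs →
      A.card ≤ B.card →
      (A.card : ℝ) ≤ (p:ℝ) ^ ((3:ℝ)/5) →
      (B.card : ℝ) ≤ (p:ℝ) ^ ((3:ℝ)/5) →
      (Cs.card : ℝ) ≤ (p:ℝ) ^ ((3:ℝ)/5) →
      (E4 B Cs : ℝ) ≤
        C * ((mu g : ℕ) : ℝ) ^ 4 *
          min (((Finset.image₂ (fun x y => g x * (h x + y)) A B).card : ℝ) ^ 3 * (Cs.card : ℝ) ^ 2 / (A.card : ℝ))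
              (((Finset.image₂ (fun x y => g x * (h x + y)) A B).card : ℝ) ^ 2 * (Cs.card : ℝ) ^ 3 / (A.card : ℝ)) *
          Real.log (2 * (A.card : ℝ)) := by
  refine ⟨2000000000, by norm_num, ?_⟩
  intro p _ _ g h hg _ A B Cs hA hB hC hA0 _ _ hAB hA5 hB5 hC5
  obtain ⟨A', hA', hinj, hmu⟩ := mu_bound g hg A hA0
  have hApos := hA.card_pos
  have hcle := Finset.card_le_card hA'
  have hA'pos : 0 < A'.card := by
    rcases Nat.eq_zero_or_pos A'.card with h0 | h0
    · rw [h0] at hmu; omega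
    · exact h0
  have hm : 1 ≤ mu g := by
    rcases Nat.eq_zero_or_pos (mu g) with h0 | h0
    · rw [h0] at hmu; omega
    · exact h0
  have h5 := pow5_le hA5
  obtain ⟨n1, n2⟩ := nat_bound g h A' B Cs (Finset.card_pos.1 hA'pos) hB hC
    (fun a ha => hg a (fun h0 => hA0 (h0 ▸ hA' ha))) hinj (hcle.trans hAB)
    ((Nat.pow_le_pow_left hcle 5).trans h5) (pow5_le hB5) (pow5_le hC5) _ rfl
  have hff : (Finset.image₂ (fun x y => g x * (h x + y)) A' B).card ≤
      (Finset.image₂ (fun x y => g x * (h x + y)) A B).card :=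
    Finset.card_le_card (Finset.image₂_subset_right hA')
  have hl : ((Nat.log 2 A'.card + 1 : ℕ) : ℝ) ≤ 2 * Real.log (2 * (A.card : ℝ)) := by
    refine (log_bound _ hA'pos).trans ?_
    have h1 : (0 : ℝ) < A'.card := by exact_mod_cast hA'pos
    have h2 : (A'.card : ℝ) ≤ A.card := by exact_mod_cast hcle
    have := Real.log_le_log (by positivity) (by linarith : 2 * (A'.card : ℝ) ≤ 2 * A.card)
    linarith
  have hff' : ((Finset.image₂ (fun x y => g x * (h x + y)) A' B).card : ℝ) ≤
      (Finset.image₂ (fun x y => g x * (h x + y)) A B).card := by exact_mod_cast hff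
  rcases min_choice
    (((Finset.image₂ (fun x y => g x * (h x + y)) A B).card : ℝ) ^ 3 * (Cs.card : ℝ) ^ 2 / (A.card : ℝ))
    (((Finset.image₂ (fun x y => g x * (h x + y)) A B).card : ℝ) ^ 2 * (Cs.card : ℝ) ^ 3 / (A.card : ℝ))
    with hc | hc
  · rw [hc]
    refine fin_real (U := fun f => (f : ℝ) ^ 3 * (Cs.card : ℝ) ^ 2) hA'pos hApos hm hmu hcle hl
      (f := (Finset.image₂ (fun x y => g x * (h x + y)) A' B).card) ?_ ?_ ?_
    · gcongr
    · positivity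
    · exact_mod_cast n1
  · rw [hc]
    refine fin_real (U := fun f => (f : ℝ) ^ 2 * (Cs.card : ℝ) ^ 3) hA'pos hApos hm hmu hcle hl
      (f := (Finset.image₂ (fun x y => g x * (h x + y)) A' B).card) ?_ ?_ ?_
    · gcongr
    · positivity
    · exact_mod_cast n2
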